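/- With X = {0,1}^ℤ, shift σ, Bernoulli measure μ_λ of parameter λ, and roof function f(u) = g(k_u) with k g(k) → l ∈ (0,∞), the entropy of the induced suspension-flow measure ν_{μ_λ} satisfies h(ν_{μ_λ}) = h(μ_λ)/∫f dμ_λ → 1/(2l) as λ → 0. -/

import Mathlib

open MeasureTheory Filter Topology
open scoped ENNReal

/-- Shannon entropy of a measure on a finite space. -/
noncomputable def shannonEnt {β : Type*} [Fintype β] [MeasurableSpace β] (ν : Measure β) : ℝ :=
  ∑ b : β, Real.negMulLog (ν {b}).toReal

/-- Dynamical entropy of `(S,μ)` with respect to the finite observable `P`. -/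
noncomputable def obsEntropy {α : Type*} [MeasurableSpace α] (S : α → α) (μ : Measure α)
    {m : ℕ} (P : α → Fin m) : ℝ≥0∞ :=
  Filter.liminf (fun n : ℕ =>
    ENNReal.ofReal (shannonEnt (μ.map fun x => fun i : Fin n => P (S^[(i : ℕ)] x)) / n))
    Filter.atTop

/-- Kolmogorov–Sinai (measure-theoretic) entropy of `(S,μ)`. -/
noncomputable def kolSinai {α : Type*} [MeasurableSpace α] (S : α → α) (μ : Measure α) : ℝ≥0∞ :=
  ⨆ (m : ℕ) (P : α → Fin m) (_ : Measurable P), obsEntropy S μ P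

/-- The relation generating the suspension space: `(x,s) ~ (Tx, s - f x)`. -/
def suspRel {X : Type*} (T : X → X) (f : X → ℝ) : X × ℝ → X × ℝ → Prop :=
  fun p q => q = (T p.1, p.2 - f p.1)

/-- The suspension space `X^f` over `T` with roof function `f`. -/
abbrev SuspSpace {X : Type*} (T : X → X) (f : X → ℝ) := Quot (suspRel T f)

/-- The suspension flow `T^f_t`, induced by translation in the second coordinate. -/
def suspFlow {X : Type*} (T : X → X) (f : X → ℝ) (t : ℝ) :
    SuspSpace T f → SuspSpace T f :=
  Quot.map (fun p => (p.1, p.2 + t)) (by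
    intro a b h
    simp only [suspRel] at h ⊢
    subst h
    show ((T a.1, a.2 - f a.1 + t) : X × ℝ) = (T a.1, a.2 + t - f a.1)
    rw [sub_add_eq_add_sub])

/-- The measure `Θ(μ) = (μ × Leb)|_{X^f} / ∫ f dμ` on the suspension space. -/
noncomputable def suspMeasure {X : Type*} [MeasurableSpace X] (T : X → X) (f : X → ℝ)
    (μ : Measure X) : Measure (SuspSpace T f) :=
  (ENNReal.ofReal (∫ x, f x ∂μ))⁻¹ •
    (((μ.prod volume).restrict {p : X × ℝ | 0 ≤ p.2 ∧ p.2 < f p.1}).map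
      (Quot.mk (suspRel T f)))

/-- The full shift space `{0,1}^ℤ`. -/
abbrev BSeq := ℤ → Bool

/-- The zero sequence `0^∞`. -/
def zeroSeq : BSeq := fun _ => false

/-- The shift `σ`. -/
def shiftMap : BSeq → BSeq := fun u n => u (n + 1)

/-- `k_u = min {|n| : u_n = 1}`. -/
noncomputable def kabs (u : BSeq) : ℕ := sInf {m : ℕ | ∃ n : ℤ, n.natAbs = m ∧ u n = true}

open Classical in
/-- The roof function `f(u) = g(k_u)`, `f(0^∞) = 0`. -/
noncomputable def fRoof (g : ℕ → ℝ) (u : BSeq) : ℝ := if u = zeroSeq then 0 else g (kabs u)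

/-! `ν_{μ_λ}` is invariant under the time-one map, but Abramov's formula is not available for it, so
its entropy is computed by counting names. Lower bound: recording the symbols read by the flow
during each unit of time, up to a fixed number per unit, determines all but a small proportion of
the first `n / ∫ f` symbols of the base point, and by equipartition these carry the information
`n h(μ_λ) / ∫ f`. Upper bound: by compactness the pieces of a partition agree, off a set of small
measure, with sets seen at a finite scale; hence the `n`-name of a point is determined, up to an
error of small Hamming density, by its height and a window of about `n / ∫ f` symbols, of which
equipartition leaves `exp (n h(μ_λ) / ∫ f)`. The roof is infinite-range, but its Birkhoff sums are
determined by a window as soon as a `1` occurs near both ends.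

For the limit, `k_u = k + 1` has probability `(1 - λ) ^ (2 k + 1) - (1 - λ) ^ (2 k + 3)`, so `∫ f`
is essentially `2 λ ∑ g (k + 1) (1 - λ) ^ (2 k)`; since `g (k + 1) ∼ l / (k + 1)`, the Abelian
theorem for `∑ q ^ k / (k + 1) = -log (1 - q) / q` gives `∫ f ∼ -2 l λ log λ`, while
`h(μ_λ) ∼ -λ log λ`. -/

section FiniteEntropy

variable {β : Type*} [Fintype β] [MeasurableSpace β]

lemma shannonEnt_eq_sum_measureReal (ν : Measure β) :
    shannonEnt ν = ∑ b, Real.negMulLog (ν.real {b}) :=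
  rfl

lemma negMulLog_le_one_sub {x : ℝ} (hx : 0 ≤ x) : Real.negMulLog x ≤ 1 - x := by
  rcases hx.eq_or_lt with rfl | hx
  · simp
  · have h := mul_le_mul_of_nonneg_left (Real.one_sub_inv_le_log_of_pos hx) hx.le
    rw [mul_sub, mul_inv_cancel₀ hx.ne'] at h
    rw [Real.negMulLog]
    linarith

lemma sum_negMulLog_le {ι : Type*} (J : Finset ι) {a : ι → ℝ} (ha : ∀ i ∈ J, 0 ≤ a i) :
    ∑ i ∈ J, Real.negMulLog (a i)
      ≤ (∑ i ∈ J, a i) * Real.log J.card + Real.negMulLog (∑ i ∈ J, a i) := by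
  rcases J.eq_empty_or_nonempty with rfl | hJ
  · simp
  have hcard : (0 : ℝ) < J.card := by exact_mod_cast hJ.card_pos
  have hlog : Real.negMulLog (J.card : ℝ)⁻¹ = (J.card : ℝ)⁻¹ * Real.log J.card := by
    rw [Real.negMulLog, Real.log_inv, neg_mul_neg]
  have hjensen := Real.concaveOn_negMulLog.le_map_sum (t := J) (w := fun _ => (J.card : ℝ)⁻¹)
    (p := a) (fun _ _ => by positivity) (by simp [hcard.ne']) ha
  simp only [smul_eq_mul, ← Finset.mul_sum, Real.negMulLog_mul, hlog] at hjensen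
  have hscaled := mul_le_mul_of_nonneg_left hjensen hcard.le
  rw [mul_inv_cancel_left₀ hcard.ne'] at hscaled
  refine hscaled.trans_eq ?_
  field_simp

lemma shannonEnt_le_log_card_add [MeasurableSingletonClass β] (ν : Measure β)
    [IsProbabilityMeasure ν] (J : Finset β) :
    shannonEnt ν
      ≤ Real.log J.card + ν.real (J : Set β)ᶜ * Real.log (Fintype.card β) + 1 := by
  classical
  have hJ : ∑ b ∈ J, ν.real {b} = ν.real J := sum_measureReal_singleton J
  have hJc : ∑ b ∈ Jᶜ, ν.real {b} = ν.real (J : Set β)ᶜ := by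
    rw [sum_measureReal_singleton, Finset.coe_compl]
  have hadd : ν.real J + ν.real (J : Set β)ᶜ = 1 :=
    probReal_add_probReal_compl (Finset.measurableSet J)
  have hentJ := sum_negMulLog_le J (a := fun b => ν.real {b}) fun _ _ => measureReal_nonneg
  have hentJc := sum_negMulLog_le Jᶜ (a := fun b => ν.real {b}) fun _ _ => measureReal_nonneg
  rw [hJ] at hentJ
  rw [hJc] at hentJc
  have hlogJ : ν.real J * Real.log J.card ≤ Real.log J.card :=
    mul_le_of_le_one_left (Real.log_natCast_nonneg _) measureReal_le_one
  have hlogJc : ν.real (J : Set β)ᶜ * Real.log Jᶜ.card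
      ≤ ν.real (J : Set β)ᶜ * Real.log (Fintype.card β) := by
    refine mul_le_mul_of_nonneg_left ?_ measureReal_nonneg
    rcases Jᶜ.card.eq_zero_or_pos with hzero | hpos
    · rw [hzero, Nat.cast_zero, Real.log_zero]
      exact Real.log_natCast_nonneg _
    · exact Real.log_le_log (by exact_mod_cast hpos) (by exact_mod_cast Finset.card_le_univ _)
  rw [shannonEnt_eq_sum_measureReal, ← Finset.sum_add_sum_compl J]
  linarith [negMulLog_le_one_sub (measureReal_nonneg (μ := ν) (s := (J : Set β))),
    negMulLog_le_one_sub (measureReal_nonneg (μ := ν) (s := (J : Set β)ᶜ))]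

lemma card_filter_le_measureReal_mul_le [MeasurableSingletonClass β] (ν : Measure β)
    [IsProbabilityMeasure ν] (t : ℝ) :
    (Finset.card {b | t ≤ ν.real {b}} : ℝ) * t ≤ 1 := by
  calc (Finset.card {b | t ≤ ν.real {b}} : ℝ) * t
      ≤ ∑ b with t ≤ ν.real {b}, ν.real {b} := by
        rw [← nsmul_eq_mul]
        exact Finset.card_nsmul_le_sum _ _ _ fun b hb => (Finset.mem_filter.1 hb).2
    _ ≤ 1 := by
        rw [sum_measureReal_singleton]
        exact measureReal_le_one

lemma measureReal_mul_neg_log_le_shannonEnt [MeasurableSingletonClass β] (ν : Measure β)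
    [IsProbabilityMeasure ν] (t : ℝ) :
    ν.real {b | ν.real {b} ≤ t} * -Real.log t ≤ shannonEnt ν := by
  calc ν.real {b | ν.real {b} ≤ t} * -Real.log t
      = ∑ b with ν.real {b} ≤ t, ν.real {b} * -Real.log t := by
        rw [← Finset.sum_mul, sum_measureReal_singleton, Finset.coe_filter_univ]
    _ ≤ ∑ b with ν.real {b} ≤ t, Real.negMulLog (ν.real {b}) := by
        refine Finset.sum_le_sum fun b hb => ?_
        rcases (measureReal_nonneg (μ := ν) (s := {b})).eq_or_lt with hzero | hpos
        · simp [← hzero]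
        · rw [Real.negMulLog, neg_mul_comm]
          gcongr
          exact (Finset.mem_filter.1 hb).2
    _ ≤ shannonEnt ν := Finset.sum_le_sum_of_subset_of_nonneg (Finset.subset_univ _)
        fun _ _ _ => Real.negMulLog_nonneg measureReal_nonneg measureReal_le_one

lemma measureReal_map_le_of_fiber_le {Ω γ : Type*} [MeasurableSpace Ω] [Finite γ]
    [MeasurableSpace γ] [MeasurableSingletonClass γ] {ν : Measure Ω} [IsProbabilityMeasure ν]
    {F : Ω → γ} (hF : Measurable F) {G : Set Ω} {b t : ℝ} (ht : 0 < t)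
    (hfiber : ∀ v, ν.real (F ⁻¹' {v} ∩ G) ≤ b) :
    (ν.map F).real {v | t ≤ (ν.map F).real {v}} ≤ b / t + ν.real Gᶜ := by
  have := Fintype.ofFinite γ
  have := Measure.isProbabilityMeasure_map (μ := ν) hF.aemeasurable
  have hb : 0 ≤ b := by
    obtain ⟨x⟩ := nonempty_of_isProbabilityMeasure ν
    exact measureReal_nonneg.trans (hfiber (F x))
  set V : Finset γ := {v | t ≤ (ν.map F).real {v}} with hV
  have hcard : (V.card : ℝ) ≤ 1 / t :=
    (le_div_iff₀ ht).2 (card_filter_le_measureReal_mul_le (ν.map F) t)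
  have hcover : F ⁻¹' V ⊆ (⋃ v ∈ V, F ⁻¹' {v} ∩ G) ∪ Gᶜ := by
    intro x hx
    by_cases hG : x ∈ G
    · exact Or.inl (Set.mem_biUnion (Finset.mem_coe.1 hx) ⟨rfl, hG⟩)
    · exact Or.inr hG
  calc (ν.map F).real {v | t ≤ (ν.map F).real {v}} = ν.real (F ⁻¹' V) := by
        rw [hV, Finset.coe_filter_univ, map_measureReal_apply hF (Set.toFinite _).measurableSet]
    _ ≤ ν.real (⋃ v ∈ V, F ⁻¹' {v} ∩ G) + ν.real Gᶜ :=
        (measureReal_mono hcover).trans (measureReal_union_le _ _)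
    _ ≤ V.card * b + ν.real Gᶜ := by
        gcongr
        rw [← nsmul_eq_mul]
        exact (measureReal_biUnion_finset_le _ _).trans
          (Finset.sum_le_card_nsmul _ _ _ fun v _ => hfiber v)
    _ ≤ b / t + ν.real Gᶜ := by
        gcongr
        calc (V.card : ℝ) * b ≤ 1 / t * b := by gcongr
          _ = b / t := one_div_mul_eq_div t b

lemma mul_neg_log_le_shannonEnt_map [MeasurableSingletonClass β] {Ω : Type*} [MeasurableSpace Ω]
    {ν : Measure Ω} [IsProbabilityMeasure ν] {F : Ω → β} (hF : Measurable F) {G : Set Ω}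
    {b t ε : ℝ} (ht : 0 < t) (ht1 : t ≤ 1) (hfiber : ∀ v, ν.real (F ⁻¹' {v} ∩ G) ≤ b)
    (hb : b / t ≤ ε) (hG : ν.real Gᶜ ≤ ε) :
    (1 - 2 * ε) * -Real.log t ≤ shannonEnt (ν.map F) := by
  have := Measure.isProbabilityMeasure_map (μ := ν) hF.aemeasurable
  have hheavy := measureReal_map_le_of_fiber_le hF ht hfiber
  have hcover : 1 ≤ (ν.map F).real {v | (ν.map F).real {v} ≤ t}
      + (ν.map F).real {v | t ≤ (ν.map F).real {v}} := by
    refine probReal_univ.symm.trans_le ((measureReal_mono fun v _ => ?_).trans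
      (measureReal_union_le _ _))
    exact le_total ((ν.map F).real {v}) t
  refine le_trans ?_ (measureReal_mul_neg_log_le_shannonEnt (ν.map F) t)
  refine mul_le_mul_of_nonneg_right (by linarith) ?_
  exact neg_nonneg.2 (Real.log_nonpos ht.le ht1)

end FiniteEntropy

section HammingBall

lemma sum_ite_ne_le_exp {α : Type*} [Fintype α] [DecidableEq α] (a₀ : α) {t : ℝ} (ht : 0 ≤ t) :
    ∑ a, (if a ≠ a₀ then t else 1) ≤ Real.exp (Fintype.card α * t) := by
  calc ∑ a, (if a ≠ a₀ then t else 1) ≤ ∑ a, (t + if a = a₀ then 1 else 0) := by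
        refine Finset.sum_le_sum fun a _ => ?_
        by_cases h : a = a₀ <;> simp [h, ht]
    _ = Fintype.card α * t + 1 := by simp [Finset.sum_add_distrib]
    _ ≤ Real.exp (Fintype.card α * t) := Real.add_one_le_exp _

/- Chernoff: weight each word `w` by `t ^ hammingDist w v`. -/
lemma card_mul_pow_le_exp_of_hammingDist_le {α ι : Type*} [Fintype α] [DecidableEq α] [Fintype ι]
    {t : ℝ} (ht : 0 < t) (ht1 : t ≤ 1) (v : ι → α) {B : Finset (ι → α)} {r : ℝ}
    (hB : ∀ w ∈ B, (hammingDist w v : ℝ) ≤ r) :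
    (B.card : ℝ) * Real.exp (r * Real.log t)
      ≤ Real.exp (Fintype.card α * t * Fintype.card ι) := by
  classical
  calc (B.card : ℝ) * Real.exp (r * Real.log t)
      = ∑ _w ∈ B, Real.exp (r * Real.log t) := by
        rw [Finset.sum_const, nsmul_eq_mul]
    _ ≤ ∑ w ∈ B, ∏ i, (if w i ≠ v i then t else 1) := by
        refine Finset.sum_le_sum fun w hw => ?_
        rw [← Finset.prod_filter, Finset.prod_const, ← Real.rpow_natCast,
          Real.rpow_def_of_pos ht, Real.exp_le_exp, mul_comm]
        exact mul_le_mul_of_nonpos_left (hB w hw) (Real.log_nonpos ht.le ht1)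
    _ ≤ ∑ w : ι → α, ∏ i, (if w i ≠ v i then t else 1) :=
        Finset.sum_le_sum_of_subset_of_nonneg (Finset.subset_univ _) fun w _ _ =>
          Finset.prod_nonneg fun i _ => by split_ifs <;> positivity
    _ = ∏ i, ∑ a, (if a ≠ v i then t else 1) :=
        (Fintype.prod_sum fun i a => if a ≠ v i then t else (1 : ℝ)).symm
    _ ≤ ∏ _i : ι, Real.exp (Fintype.card α * t) :=
        Finset.prod_le_prod
          (fun i _ => Finset.sum_nonneg fun a _ => by split_ifs <;> positivity)
          fun i _ => sum_ite_ne_le_exp (v i) ht.le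
    _ = Real.exp (Fintype.card α * t * Fintype.card ι) := by
        rw [Finset.prod_const, Finset.card_univ, ← Real.exp_nat_mul, mul_comm]

lemma exists_card_le_exp_of_hammingDist_le (α : Type*) [Finite α] [DecidableEq α] {ε : ℝ}
    (hε : 0 < ε) :
    ∃ η > 0, ∀ (n : ℕ) (v : Fin n → α) (B : Finset (Fin n → α)),
      (∀ w ∈ B, (hammingDist w v : ℝ) ≤ η * n) → (B.card : ℝ) ≤ Real.exp (ε * n) := by
  have := Fintype.ofFinite α
  obtain ⟨t, ⟨ht0, ht1⟩, ht⟩ : ∃ t ∈ Set.Ioo (0 : ℝ) 1, Fintype.card α * t ≤ ε / 2 := by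
    have hsmall : ∀ᶠ t : ℝ in 𝓝[>] 0, Fintype.card α * t < ε / 2 :=
      ((by fun_prop : Continuous fun t : ℝ => Fintype.card α * t).tendsto' 0 0 (mul_zero _)
        |>.mono_left nhdsWithin_le_nhds).eventually_lt_const (by positivity)
    obtain ⟨t, htsmall, ht⟩ := (hsmall.and (Ioo_mem_nhdsGT one_pos)).exists
    exact ⟨t, ht, htsmall.le⟩
  have hlog : Real.log t < 0 := Real.log_neg ht0 ht1
  refine ⟨ε / 2 / -Real.log t, div_pos (by positivity) (by linarith), fun n v B hB => ?_⟩
  have hchernoff := card_mul_pow_le_exp_of_hammingDist_le ht0 ht1.le v hB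
  have hexponent : ε / 2 / -Real.log t * n * Real.log t = -(ε / 2 * n) := by
    field_simp [hlog.ne]
  rw [hexponent, Real.exp_neg, ← div_eq_mul_inv, div_le_iff₀ (Real.exp_pos _), Fintype.card_fin,
    ← Real.exp_add] at hchernoff
  refine hchernoff.trans (Real.exp_le_exp.2 ?_)
  nlinarith [mul_le_mul_of_nonneg_right ht (Nat.cast_nonneg (α := ℝ) n)]

end HammingBall

section AbelianTheorem

open Asymptotics

lemma summable_mul_pow_of_isBigO {b c : ℕ → ℝ} (hcb : c =O[atTop] b) {q : ℝ}
    (hbq : Summable fun k => b k * q ^ k) : Summable fun k => c k * q ^ k :=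
  summable_of_isBigO_nat hbq.abs ((hcb.mul (isBigO_refl _ _)).trans (isBigO_abs_right.2
    (isBigO_refl _ _)))

lemma isLittleO_tsum_mul_pow {b c : ℕ → ℝ} (hb : ∀ k, 0 ≤ b k) (hcb : c =o[atTop] b)
    (hsummable : ∀ q ∈ Set.Ioo (0 : ℝ) 1, Summable fun k => b k * q ^ k)
    (htop : Tendsto (fun q => ∑' k, b k * q ^ k) (𝓝[<] 1) atTop) :
    (fun q => ∑' k, c k * q ^ k) =o[𝓝[<] 1] fun q => ∑' k, b k * q ^ k := by
  refine isLittleO_iff.2 fun ε hε => ?_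
  obtain ⟨K, hK⟩ := eventually_atTop.1 (isLittleO_iff.1 hcb (half_pos hε))
  set B := ∑ k ∈ Finset.range K, |c k| with hB
  filter_upwards [Ioo_mem_nhdsLT zero_lt_one, htop.eventually_ge_atTop (B / (ε / 2)),
    htop.eventually_ge_atTop 0] with q hq hlarge hnonneg
  have hhead : HasSum (fun k => if k < K then |c k| else 0) B := by
    rw [hB, Finset.sum_congr rfl fun k hk => (if_pos (Finset.mem_range.1 hk)).symm]
    exact hasSum_sum_of_ne_finset_zero fun k hk => if_neg (by simpa using hk)
  have hterm (k : ℕ) :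
      ‖c k * q ^ k‖ ≤ (if k < K then |c k| else 0) + ε / 2 * (b k * q ^ k) := by
    have hqk : 0 ≤ q ^ k := pow_nonneg hq.1.le k
    rw [norm_mul, Real.norm_eq_abs, Real.norm_of_nonneg hqk]
    split_ifs with hk
    · have hhalf : 0 ≤ ε / 2 * (b k * q ^ k) := by have := hb k; positivity
      linarith [mul_le_of_le_one_right (abs_nonneg (c k)) (pow_le_one₀ (n := k) hq.1.le hq.2.le)]
    · rw [zero_add, ← mul_assoc]
      refine mul_le_mul_of_nonneg_right ?_ hqk
      simpa [abs_of_nonneg (hb k)] using hK k (not_lt.1 hk)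
  have hbound := tsum_of_norm_bounded
    (hhead.add ((hsummable q hq).hasSum.mul_left (ε / 2))) hterm
  rw [div_le_iff₀' (half_pos hε)] at hlarge
  rw [Real.norm_of_nonneg hnonneg]
  linarith

lemma hasSum_one_div_succ_mul_pow {q : ℝ} (hq0 : 0 < q) (hq1 : q < 1) :
    HasSum (fun k : ℕ => 1 / ((k : ℝ) + 1) * q ^ k) (-Real.log (1 - q) / q) := by
  have h := (Real.hasSum_pow_div_log_of_abs_lt_one (abs_lt.2 ⟨by linarith, hq1⟩)).div_const q
  refine h.congr_fun fun k => ?_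
  rw [pow_succ]
  field_simp

lemma tendsto_neg_log_one_sub :
    Tendsto (fun q : ℝ => -Real.log (1 - q)) (𝓝[<] 1) atTop := by
  have hsub : Tendsto (fun q : ℝ => 1 - q) (𝓝[<] 1) (𝓝[>] 0) := by
    refine tendsto_nhdsWithin_iff.2 ⟨?_, ?_⟩
    · exact ((by fun_prop : Continuous fun q : ℝ => 1 - q).tendsto' 1 0 (sub_self 1)).mono_left
        nhdsWithin_le_nhds
    · filter_upwards [self_mem_nhdsWithin] with q hq using sub_pos.2 (Set.mem_Iio.1 hq)
  exact tendsto_neg_atBot_atTop.comp (Real.tendsto_log_nhdsGT_zero.comp hsub)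

lemma isEquivalent_tsum_one_div_succ_mul_pow :
    (fun q : ℝ => ∑' k : ℕ, 1 / ((k : ℝ) + 1) * q ^ k)
      ~[𝓝[<] 1] fun q => -Real.log (1 - q) := by
  have hinv : Tendsto (fun q : ℝ => q⁻¹) (𝓝[<] 1) (𝓝 1) :=
    ((tendsto_inv₀ one_ne_zero).mono_left nhdsWithin_le_nhds).trans_eq (by rw [inv_one])
  have h := (IsEquivalent.refl (u := fun q : ℝ => -Real.log (1 - q)) (l := 𝓝[<] 1)).mul
    ((isEquivalent_const_iff_tendsto one_ne_zero).2 hinv)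
  refine (h.congr_left ?_).congr_right (.of_eq (by ext; simp))
  filter_upwards [Ioo_mem_nhdsLT zero_lt_one] with q hq
  rw [(hasSum_one_div_succ_mul_pow hq.1 hq.2).tsum_eq, div_eq_mul_inv]
  rfl

lemma isEquivalent_tsum_mul_pow {a : ℕ → ℝ} {l : ℝ} (hl : l ≠ 0)
    (ha : Tendsto (fun k : ℕ => ((k : ℝ) + 1) * a k) atTop (𝓝 l)) :
    (fun q : ℝ => ∑' k, a k * q ^ k) ~[𝓝[<] 1] fun q => l * -Real.log (1 - q) := by
  let b : ℕ → ℝ := fun k => 1 / ((k : ℝ) + 1)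
  have hbsum (q : ℝ) (hq : q ∈ Set.Ioo 0 1) : Summable fun k => b k * q ^ k :=
    (hasSum_one_div_succ_mul_pow hq.1 hq.2).summable
  have hac : (fun k => a k - l * b k) =o[atTop] b := by
    refine (isLittleO_iff_tendsto' (.of_forall fun k hk => ?_)).2 ?_
    · exact absurd hk (by positivity)
    · refine (ha.sub_const l).congr (fun k => ?_) |>.trans_eq (by rw [sub_self])
      simp only [b]
      field_simp
  have hlittle := isLittleO_tsum_mul_pow (fun k => by positivity) hac hbsum
    (isEquivalent_tsum_one_div_succ_mul_pow.symm.tendsto_atTop tendsto_neg_log_one_sub)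
  have hmain := (IsEquivalent.refl (u := fun _ => l)).mul isEquivalent_tsum_one_div_succ_mul_pow
  refine IsEquivalent.trans ?_ hmain
  refine (hlittle.const_mul_right hl).congr' ?_ (.of_forall fun _ => rfl)
  filter_upwards [Ioo_mem_nhdsLT zero_lt_one] with q hq
  have hc := summable_mul_pow_of_isBigO hac.isBigO (hbsum q hq)
  have hsplit (k : ℕ) : a k * q ^ k = (a k - l * b k) * q ^ k + l * (b k * q ^ k) := by ring
  rw [Pi.sub_apply, Pi.mul_apply, tsum_congr hsplit, hc.tsum_add ((hbsum q hq).mul_left l),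
    tsum_mul_left, add_sub_cancel_right]

end AbelianTheorem

section SmallParameter

open Asymptotics

lemma isEquivalent_neg_log_mul_two_sub :
    (fun p : ℝ => -Real.log (p * (2 - p))) ~[𝓝[>] 0] fun p => -Real.log p := by
  have hlog2 : (fun p : ℝ => -Real.log (2 - p)) =O[𝓝[>] 0] fun _ => (1 : ℝ) := by
    have hcont : ContinuousAt (fun p : ℝ => -Real.log (2 - p)) 0 :=
      (ContinuousAt.log (by fun_prop) (by norm_num)).neg
    exact (hcont.tendsto.mono_left nhdsWithin_le_nhds).isBigO_one ℝ
  have hone : (fun _ : ℝ => (1 : ℝ)) =o[𝓝[>] 0] fun p => -Real.log p :=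
    (isLittleO_const_left.2 (.inr (tendsto_norm_atTop_atTop.comp
      (tendsto_neg_atBot_atTop.comp Real.tendsto_log_nhdsGT_zero))))
  refine (hlog2.trans_isLittleO hone).congr' ?_ .rfl
  filter_upwards [Ioo_mem_nhdsGT zero_lt_two] with p hp
  rw [Pi.sub_apply, Real.log_mul hp.1.ne' (by linarith [hp.2])]
  ring

lemma isLittleO_id_negMulLog : (fun p : ℝ => p) =o[𝓝[>] 0] Real.negMulLog := by
  have hone : (fun _ : ℝ => (1 : ℝ)) =o[𝓝[>] 0] Real.log := isLittleO_const_left.2 <|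
    .inr (tendsto_abs_atBot_atTop.comp Real.tendsto_log_nhdsGT_zero)
  simpa [Real.negMulLog_def] using (isBigO_refl (fun p : ℝ => p) _).mul_isLittleO hone

lemma isEquivalent_binEntropy_negMulLog : Real.binEntropy ~[𝓝[>] 0] Real.negMulLog := by
  have hderiv : HasDerivAt (fun p : ℝ => Real.negMulLog (1 - p)) 1 0 := by
    have h := (Real.hasDerivAt_negMulLog (x := 1 - 0) (by norm_num)).comp_const_sub 1 0
    simpa using h
  have hlinear : (fun p : ℝ => Real.negMulLog (1 - p)) =O[𝓝[>] 0] fun p => p := by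
    simpa using hderiv.isBigO_sub.mono nhdsWithin_le_nhds
  refine (hlinear.trans_isLittleO isLittleO_id_negMulLog).congr' (.of_forall fun p => ?_) .rfl
  simp [Real.binEntropy_eq_negMulLog_add_negMulLog_one_sub]

lemma isEquivalent_geometric_mean {g : ℕ → ℝ} {l : ℝ} (hl : l ≠ 0)
    (hkg : Tendsto (fun k : ℕ => (k : ℝ) * g k) atTop (𝓝 l)) :
    (fun p : ℝ => p * g 0 + (1 - p) * (p * (2 - p)) * ∑' k, g (k + 1) * ((1 - p) ^ 2) ^ k)
      ~[𝓝[>] 0] fun p => 2 * l * Real.negMulLog p := by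
  have hsq : Tendsto (fun p : ℝ => (1 - p) ^ 2) (𝓝[>] 0) (𝓝[<] 1) := by
    refine tendsto_nhdsWithin_iff.2 ⟨?_, ?_⟩
    · exact ((by fun_prop : Continuous fun p : ℝ => (1 - p) ^ 2).tendsto' 0 1
        (by norm_num)).mono_left nhdsWithin_le_nhds
    · filter_upwards [Ioo_mem_nhdsGT zero_lt_one] with p hp
      exact pow_lt_one₀ (sub_nonneg.2 hp.2.le) (sub_lt_self 1 hp.1) two_ne_zero
  have hseries : (fun p : ℝ => ∑' k, g (k + 1) * ((1 - p) ^ 2) ^ k)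
      ~[𝓝[>] 0] fun p => l * -Real.log p := by
    have hshift : Tendsto (fun k : ℕ => ((k : ℝ) + 1) * g (k + 1)) atTop (𝓝 l) := by
      simpa using (tendsto_add_atTop_iff_nat (f := fun k : ℕ => (k : ℝ) * g k) 1).2 hkg
    have h := (isEquivalent_tsum_mul_pow hl hshift).comp_tendsto hsq
    refine h.trans ?_
    have hq (p : ℝ) : 1 - (1 - p) ^ 2 = p * (2 - p) := by ring
    simp only [Function.comp_def, hq]
    exact (IsEquivalent.refl (u := fun _ : ℝ => l)).mul isEquivalent_neg_log_mul_two_sub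
  have hweight : (fun p : ℝ => (1 - p) * (2 - p)) ~[𝓝[>] 0] fun _ => 2 :=
    (isEquivalent_const_iff_tendsto two_ne_zero).2 <|
      ((by fun_prop : Continuous fun p : ℝ => (1 - p) * (2 - p)).tendsto' 0 2
        (by norm_num)).mono_left nhdsWithin_le_nhds
  have hmain := ((IsEquivalent.refl (u := fun p : ℝ => p)).mul hweight).mul hseries
  have hsmall : (fun p : ℝ => p * g 0) =o[𝓝[>] 0] fun p => 2 * l * Real.negMulLog p :=
    ((isLittleO_id_negMulLog.const_mul_left (g 0)).const_mul_right
      (mul_ne_zero two_ne_zero hl)).congr_left fun p => mul_comm _ _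
  have htarget : (((fun p : ℝ => p) * fun _ => 2) * fun p => l * -Real.log p)
      = fun p : ℝ => 2 * l * Real.negMulLog p := by
    ext p
    simp only [Pi.mul_apply, Real.negMulLog]
    ring
  rw [htarget] at hmain
  refine (hsmall.add_isEquivalent hmain).congr_left (.of_forall fun p => ?_)
  simp only [Pi.add_apply, Pi.mul_apply]
  ring

theorem tendsto_binEntropy_div_geometric_mean {g : ℕ → ℝ} {l : ℝ} (hl : l ≠ 0)
    (hkg : Tendsto (fun k : ℕ => (k : ℝ) * g k) atTop (𝓝 l)) :
    Tendsto (fun p : ℝ => Real.binEntropy p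
        / (p * g 0 + (1 - p) * (p * (2 - p)) * ∑' k, g (k + 1) * ((1 - p) ^ 2) ^ k))
      (𝓝[>] 0) (𝓝 (1 / (2 * l))) := by
  have hequiv := isEquivalent_binEntropy_negMulLog.div (isEquivalent_geometric_mean hl hkg)
  refine hequiv.symm.tendsto_nhds (tendsto_const_nhds.congr' ?_)
  filter_upwards [Ioo_mem_nhdsGT one_pos] with p hp
  have hlog := (Real.log_neg hp.1 hp.2).ne
  have hp0 := hp.1.ne'
  simp only [Pi.div_apply, Real.negMulLog]
  field_simp

end SmallParameter

section Suspension

/-- The standard fundamental domain of the suspension space, the region under the graph of the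
roof. -/
def suspDom {X : Type*} (f : X → ℝ) : Set (X × ℝ) := {z | 0 ≤ z.2 ∧ z.2 < f z.1}

/-- The map generating `suspRel`. -/
def suspStep {X : Type*} (T : X → X) (f : X → ℝ) (z : X × ℝ) : X × ℝ := (T z.1, z.2 - f z.1)

/-- The lift of the time `t` map `suspFlow T f t` to the unquotiented space. -/
def vert {X : Type*} (t : ℝ) (z : X × ℝ) : X × ℝ := (z.1, z.2 + t)

section Orbits

variable {X : Type*} {T : X → X} {f : X → ℝ}

lemma suspStep_iterate (j : ℕ) (z : X × ℝ) :
    (suspStep T f)^[j] z = (T^[j] z.1, z.2 - birkhoffSum T f j z.1) := by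
  induction j with
  | zero => simp
  | succ j ih =>
    rw [Function.iterate_succ_apply', ih, suspStep, birkhoffSum_succ, Function.iterate_succ_apply',
      sub_sub]

lemma suspStep_iterate_vert (j : ℕ) (t : ℝ) (z : X × ℝ) :
    (suspStep T f)^[j] (vert t z) = vert t ((suspStep T f)^[j] z) := by
  simp only [suspStep_iterate, vert, add_sub_right_comm]

lemma vert_injective (t : ℝ) : Function.Injective (vert (X := X) t) := fun z w h => by
  simpa [vert, Prod.ext_iff] using h

lemma suspStep_injective (hT : Function.Injective T) : Function.Injective (suspStep T f) := by
  intro z w h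
  obtain ⟨h1, h2⟩ := Prod.mk.inj h
  have h3 : z.1 = w.1 := hT h1
  rw [h3, sub_left_inj] at h2
  exact Prod.ext h3 h2

lemma suspFlow_iterate_mk (i : ℕ) (z : X × ℝ) :
    (suspFlow T f 1)^[i] (Quot.mk _ z) = Quot.mk _ (vert i z) := by
  induction i with
  | zero => simp [vert]
  | succ i ih =>
    rw [Function.iterate_succ_apply', ih]
    change Quot.mk _ (z.1, z.2 + i + 1) = _
    rw [vert, Nat.cast_succ, add_assoc]

lemma mk_suspStep_iterate (j : ℕ) (z : X × ℝ) :
    Quot.mk (suspRel T f) ((suspStep T f)^[j] z) = Quot.mk _ z := by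
  induction j with
  | zero => rfl
  | succ j ih =>
    rw [Function.iterate_succ_apply', ← ih]
    exact (Quot.sound (r := suspRel T f) rfl).symm

lemma mk_eq_mk_iff_exists_iterate {z w : X × ℝ} :
    Quot.mk (suspRel T f) z = Quot.mk _ w ↔
      ∃ m n, (suspStep T f)^[m] z = (suspStep T f)^[n] w := by
  refine ⟨fun h => ?_, fun ⟨m, n, h⟩ => ?_⟩
  · induction Quot.eqvGen_exact h with
    | rel z w hzw => exact ⟨1, 0, hzw.symm⟩
    | refl z => exact ⟨0, 0, rfl⟩
    | symm z w hzw ih =>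
      obtain ⟨m, n, h⟩ := ih (Quot.eqvGen_sound hzw)
      exact ⟨n, m, h.symm⟩
    | trans z w v hzw hwv ih₁ ih₂ =>
      obtain ⟨m, n, h₁⟩ := ih₁ (Quot.eqvGen_sound hzw)
      obtain ⟨a, b, h₂⟩ := ih₂ (Quot.eqvGen_sound hwv)
      exact ⟨a + m, n + b, by rw [Function.iterate_add_apply, h₁, ← Function.iterate_add_apply,
        add_comm, Function.iterate_add_apply, h₂, ← Function.iterate_add_apply]⟩
  · rw [← mk_suspStep_iterate m z, h, mk_suspStep_iterate]

lemma suspStep_iterate_snd_neg (hf0 : 0 ≤ f) {z : X × ℝ} (hz : z ∈ suspDom f) {k : ℕ}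
    (hk : 0 < k) : ((suspStep T f)^[k] z).2 < 0 := by
  obtain ⟨k, rfl⟩ := Nat.exists_eq_succ_of_ne_zero hk.ne'
  rw [suspStep_iterate, birkhoffSum_succ']
  have : 0 ≤ birkhoffSum T f k (T z.1) := Finset.sum_nonneg fun i _ => hf0 _
  linarith [hz.2]

lemma exists_iterate_eq_of_mk_eq_mk (hT : Function.Injective T) (hf0 : 0 ≤ f) {z w : X × ℝ}
    (hz : 0 ≤ z.2) (hw : w ∈ suspDom f) (h : Quot.mk (suspRel T f) z = Quot.mk _ w) :
    ∃ n, (suspStep T f)^[n] z = w := by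
  obtain ⟨m, n, h⟩ := mk_eq_mk_iff_exists_iterate.1 h
  rcases le_or_gt n m with hnm | hmn
  · obtain ⟨k, rfl⟩ := Nat.exists_eq_add_of_le hnm
    rw [Function.iterate_add_apply] at h
    exact ⟨k, (suspStep_injective hT).iterate n h⟩
  · obtain ⟨k, rfl⟩ := Nat.exists_eq_add_of_lt hmn
    rw [add_assoc, Function.iterate_add_apply] at h
    rw [(suspStep_injective hT).iterate m h] at hz
    exact absurd hz (suspStep_iterate_snd_neg hf0 hw k.succ_pos).not_ge

lemma injOn_mk_suspDom (hT : Function.Injective T) (hf0 : 0 ≤ f) :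
    Set.InjOn (Quot.mk (suspRel T f)) (suspDom f) := by
  intro z hz w hw h
  obtain ⟨n, rfl⟩ := exists_iterate_eq_of_mk_eq_mk hT hf0 hz.1 hw h
  rcases Nat.eq_zero_or_pos n with rfl | hn
  · rfl
  · exact absurd hw.1 (suspStep_iterate_snd_neg hf0 hz hn).not_ge

end Orbits

section Measurability

variable {X : Type*} [MeasurableSpace X] {f : X → ℝ}

lemma measurableSet_suspDom (hf : Measurable f) : MeasurableSet (suspDom f) :=
  (measurableSet_le measurable_const measurable_snd).inter
    (measurableSet_lt measurable_snd (hf.comp measurable_fst))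

lemma measurable_vert (t : ℝ) : Measurable (vert (X := X) t) :=
  measurable_fst.prodMk (measurable_snd.add_const t)

lemma measurable_suspStep {T : X → X} (hT : Measurable T) (hf : Measurable f) :
    Measurable (suspStep T f) := by
  unfold suspStep
  fun_prop

lemma measurable_suspFlow (T : X → X) (f : X → ℝ) (t : ℝ) : Measurable (suspFlow T f t) :=
  fun s hs => measurable_vert t (show MeasurableSet (Quot.mk (suspRel T f) ⁻¹' s) from hs)

lemma measurableEmbedding_vert (t : ℝ) : MeasurableEmbedding (vert (X := X) t) :=
  (⟨⟨vert t, vert (-t), fun z => by simp [vert], fun z => by simp [vert]⟩, measurable_vert t,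
    measurable_vert (-t)⟩ : X × ℝ ≃ᵐ X × ℝ).measurableEmbedding

lemma measurableEmbedding_suspStep_iterate (T : X ≃ᵐ X) (hf : Measurable f) (n : ℕ) :
    MeasurableEmbedding (suspStep T f)^[n] := by
  have hback : Measurable fun z : X × ℝ => (T.symm z.1, z.2 + f (T.symm z.1)) := by fun_prop
  have hstep : MeasurableEmbedding (suspStep T f) :=
    (⟨⟨suspStep T f, _, fun z => by simp [suspStep], fun z => by simp [suspStep]⟩,
      measurable_suspStep T.measurable hf, hback⟩ : X × ℝ ≃ᵐ X × ℝ).measurableEmbedding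
  induction n with
  | zero => exact .id
  | succ n ih => exact ih.comp hstep

lemma measurableSet_mk_image (T : X ≃ᵐ X) (hf : Measurable f) {B : Set (X × ℝ)}
    (hB : MeasurableSet B) : MeasurableSet (Quot.mk (suspRel T f) '' B) := by
  have h : Quot.mk (suspRel T f) ⁻¹' (Quot.mk (suspRel T f) '' B)
      = ⋃ m : ℕ, ⋃ n : ℕ, (suspStep T f)^[m] ⁻¹' ((suspStep T f)^[n] '' B) := by
    ext z
    simp only [Set.mem_preimage, Set.mem_image, Set.mem_iUnion, eq_comm (b := Quot.mk _ z),
      mk_eq_mk_iff_exists_iterate]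
    grind
  change MeasurableSet (Quot.mk (suspRel T f) ⁻¹' _)
  rw [h]
  exact .iUnion fun m => .iUnion fun n =>
    (measurableEmbedding_suspStep_iterate T hf m).measurable
      ((measurableEmbedding_suspStep_iterate T hf n).measurableSet_image.2 hB)

end Measurability

section Measure

variable {X : Type*} [MeasurableSpace X] {f : X → ℝ} {m : Measure X}

/-- The normalised product measure on the fundamental domain, the lift of `suspMeasure`. -/
noncomputable def domMeasure (f : X → ℝ) (m : Measure X) : Measure (X × ℝ) :=
  (ENNReal.ofReal (∫ x, f x ∂m))⁻¹ • (m.prod volume).restrict (suspDom f)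

lemma suspMeasure_eq_map_domMeasure (T : X → X) :
    suspMeasure T f m = (domMeasure f m).map (Quot.mk (suspRel T f)) := by
  rw [domMeasure, Measure.map_smul]
  rfl

lemma domMeasure_apply (hf : Measurable f) (E : Set (X × ℝ)) :
    domMeasure f m E = (ENNReal.ofReal (∫ x, f x ∂m))⁻¹ * m.prod volume (E ∩ suspDom f) := by
  rw [domMeasure, Measure.smul_apply, Measure.restrict_apply' (measurableSet_suspDom hf),
    smul_eq_mul]

lemma ae_mem_suspDom (hf : Measurable f) : ∀ᵐ z ∂domMeasure f m, z ∈ suspDom f :=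
  Measure.ae_smul_measure (ae_restrict_mem (measurableSet_suspDom hf)) _

lemma isProbabilityMeasure_domMeasure [SFinite m] (hf0 : 0 ≤ f) (hf : Measurable f)
    (hfc : 0 < ∫ x, f x ∂m) : IsProbabilityMeasure (domMeasure f m) := by
  have hint : Integrable f m := not_imp_comm.1 integral_undef hfc.ne'
  have hvol : m.prod volume (suspDom f) = ENNReal.ofReal (∫ x, f x ∂m) := by
    rw [Measure.prod_apply (measurableSet_suspDom hf),
      ofReal_integral_eq_lintegral_ofReal hint (ae_of_all _ hf0)]
    refine lintegral_congr fun x => ?_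
    change volume (Set.Ico 0 (f x)) = _
    rw [Real.volume_Ico, sub_zero]
  exact ⟨by rw [domMeasure_apply hf, Set.univ_inter, hvol,
    ENNReal.inv_mul_cancel (by simpa using hfc) ENNReal.ofReal_ne_top]⟩

lemma pos_of_integral_pos_of_forall_le (hfc : 0 < ∫ x, f x ∂m) {C : ℝ} (hfC : ∀ x, f x ≤ C) :
    0 < C :=
  not_le.1 fun hC => hfc.not_ge (integral_nonpos fun x => (hfC x).trans hC)

lemma measureReal_domMeasure_fst_preimage_le [IsFiniteMeasure m] (hf : Measurable f)
    (hfc : 0 < ∫ x, f x ∂m) {C : ℝ} (hfC : ∀ x, f x ≤ C) (E : Set X) :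
    (domMeasure f m).real (Prod.fst ⁻¹' E) ≤ C / (∫ x, f x ∂m) * m.real E := by
  have hC := (pos_of_integral_pos_of_forall_le hfc hfC).le
  have hsub : Prod.fst ⁻¹' E ∩ suspDom f ⊆ E ×ˢ Set.Icc 0 C := fun z hz =>
    ⟨hz.1, hz.2.1, hz.2.2.le.trans (hfC _)⟩
  have hle : domMeasure f m (Prod.fst ⁻¹' E) ≤ ENNReal.ofReal (C / (∫ x, f x ∂m) * m.real E) :=
    calc domMeasure f m (Prod.fst ⁻¹' E)
        ≤ (ENNReal.ofReal (∫ x, f x ∂m))⁻¹ * m.prod volume (E ×ˢ Set.Icc 0 C) := by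
          rw [domMeasure_apply hf]; gcongr
      _ = ENNReal.ofReal (C / (∫ x, f x ∂m) * m.real E) := by
          rw [Measure.prod_prod, Real.volume_Icc, sub_zero, div_eq_mul_inv,
            ENNReal.ofReal_mul (by positivity), ENNReal.ofReal_mul hC, ofReal_measureReal,
            ENNReal.ofReal_inv_of_pos hfc]
          ring
  exact ENNReal.toReal_le_of_le_ofReal (by positivity) hle

lemma measureReal_domMeasure_compl_suspDom_inter_le [IsFiniteMeasure m] (hf : Measurable f)
    (hfc : 0 < ∫ x, f x ∂m) {C : ℝ} (hfC : ∀ x, f x ≤ C) (E : Set X) :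
    (domMeasure f m).real (suspDom f ∩ Prod.fst ⁻¹' E)ᶜ ≤ C / (∫ x, f x ∂m) * m.real Eᶜ := by
  rw [measureReal_congr (t := Prod.fst ⁻¹' Eᶜ)]
  · exact measureReal_domMeasure_fst_preimage_le hf hfc hfC _
  · filter_upwards [ae_mem_suspDom hf] with z hz
    exact propext (not_congr (and_iff_right hz))

lemma measurePreserving_vert [SFinite m] (t : ℝ) :
    MeasurePreserving (vert t) (m.prod volume) (m.prod volume) :=
  (MeasurePreserving.id m).skew_product (g := fun _ s => s + t)
    (measurable_snd.add_const t) (ae_of_all _ fun _ => map_add_right_eq_self _ _)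

lemma measurePreserving_suspStep [SFinite m] {T : X → X} (hT : MeasurePreserving T m m)
    (hf : Measurable f) : MeasurePreserving (suspStep T f) (m.prod volume) (m.prod volume) :=
  hT.skew_product (g := fun x s => s - f x) (by fun_prop)
    (ae_of_all _ fun _ => map_sub_right_eq_self _ _)

/-- The points whose orbit under the deck map `suspStep` visits `B` after translation by `t`. -/
def visitSet (T : X → X) (f : X → ℝ) (B : Set (X × ℝ)) (t : ℝ) : Set (X × ℝ) :=
  {z | ∃ n, (suspStep T f)^[n] (vert t z) ∈ B}

lemma measurableSet_visitSet {T : X → X} (hT : Measurable T) (hf : Measurable f) {B : Set (X × ℝ)}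
    (hB : MeasurableSet B) (t : ℝ) : MeasurableSet (visitSet T f B t) := by
  simp only [visitSet, Set.ofPred_exists]
  exact .iUnion fun n => ((measurable_suspStep hT hf).iterate n).comp (measurable_vert t) hB

-- The images of the fundamental domain under `suspStep^[n] ∘ vert t` are disjoint.
lemma domMeasure_visitSet_le [SFinite m] {T : X ≃ᵐ X} (hT : MeasurePreserving T m m) (hf0 : 0 ≤ f)
    (hf : Measurable f) {B : Set (X × ℝ)} (hB : MeasurableSet B) (t : ℝ) :
    domMeasure f m (visitSet T f B t)
      ≤ (ENNReal.ofReal (∫ x, f x ∂m))⁻¹ * m.prod volume B := by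
  set G : ℕ → X × ℝ → X × ℝ := fun n => (suspStep T f)^[n] ∘ vert t with hG
  have hGemb (n) : MeasurableEmbedding (G n) :=
    (measurableEmbedding_suspStep_iterate T hf n).comp (measurableEmbedding_vert t)
  have hGpres (n) : MeasurePreserving (G n) (m.prod volume) (m.prod volume) :=
    ((measurePreserving_suspStep hT hf).iterate n).comp (measurePreserving_vert t)
  have hcover : visitSet T f B t ∩ suspDom f ⊆ ⋃ n, G n ⁻¹' (G n '' suspDom f ∩ B) :=
    fun z ⟨⟨n, hn⟩, hz⟩ => Set.mem_iUnion.2 ⟨n, ⟨z, hz, rfl⟩, hn⟩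
  have hdisj : Pairwise (Function.onFun Disjoint fun n => G n '' suspDom f ∩ B) := by
    refine (pairwise_disjoint_on _).2 fun i j hij => Set.disjoint_left.2 ?_
    rintro _ ⟨⟨z, hz, rfl⟩, -⟩ ⟨⟨w, hw, h⟩, -⟩
    obtain ⟨k, rfl⟩ := Nat.exists_eq_add_of_lt hij
    simp only [hG, Function.comp, suspStep_iterate_vert] at h
    rw [(vert_injective t).eq_iff, add_assoc, Function.iterate_add_apply,
      ((suspStep_injective T.injective).iterate i).eq_iff] at h
    exact absurd hz.1 (h ▸ (suspStep_iterate_snd_neg hf0 hw k.succ_pos).not_ge)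
  rw [domMeasure_apply hf]
  gcongr _ * ?_
  calc m.prod volume _
      ≤ ∑' n, m.prod volume (G n ⁻¹' (G n '' suspDom f ∩ B)) :=
        (measure_mono hcover).trans (measure_iUnion_le _)
    _ = ∑' n, m.prod volume (G n '' suspDom f ∩ B) := by
        simp only [(hGpres _).measure_preimage_emb (hGemb _)]
    _ = m.prod volume (⋃ n, G n '' suspDom f ∩ B) :=
        (measure_iUnion hdisj fun n =>
          ((hGemb n).measurableSet_image.2 (measurableSet_suspDom hf)).inter hB).symm
    _ ≤ m.prod volume B := measure_mono (Set.iUnion_subset fun n => Set.inter_subset_right)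

end Measure

end Suspension

section Itinerary

/-- The `n`-step name of a point under `S` with respect to the observable `P`. -/
def itinerary {α β : Type*} (S : α → α) (P : α → β) (n : ℕ) (x : α) : Fin n → β :=
  fun i => P (S^[i] x)

lemma measurable_itinerary {α β : Type*} [MeasurableSpace α] [MeasurableSpace β] {S : α → α}
    {P : α → β} (hS : Measurable S) (hP : Measurable P) (n : ℕ) : Measurable (itinerary S P n) :=
  measurable_pi_lambda _ fun i => hP.comp (hS.iterate i)

lemma itinerary_suspFlow_mk {X β : Type*} {T : X → X} {f : X → ℝ} (P : SuspSpace T f → β) (n : ℕ)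
    (z : X × ℝ) : itinerary (suspFlow T f 1) P n (Quot.mk _ z)
      = fun i : Fin n => P (Quot.mk _ (vert (i : ℕ) z)) := by
  funext i
  rw [itinerary, suspFlow_iterate_mk]

lemma map_itinerary_suspMeasure {X β : Type*} [MeasurableSpace X] [MeasurableSpace β] {T : X ≃ᵐ X}
    {f : X → ℝ} (m : Measure X) {P : SuspSpace T f → β} (hP : Measurable P) (n : ℕ) :
    (suspMeasure T f m).map (itinerary (suspFlow T f 1) P n)
      = (domMeasure f m).map fun z => itinerary (suspFlow T f 1) P n (Quot.mk _ z) := by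
  rw [suspMeasure_eq_map_domMeasure,
    Measure.map_map (measurable_itinerary (measurable_suspFlow T f 1) hP n) measurable_quot_mk]
  rfl

end Itinerary

section BlockCoding

variable {A : Type*} {N N' : ℕ → ℕ} {x x' : ℕ → A} {K M : ℕ}

open Classical in
/-- When the sequence `x` is cut into the blocks `[N i, N (i + 1))`, this keeps those of its first
`M` symbols that are not among the first `K` symbols of their block. -/
noncomputable def overflowWord (N : ℕ → ℕ) (x : ℕ → A) (K M : ℕ) : Fin M → Option A :=
  fun j => if ∃ i, N i + K ≤ j ∧ (j : ℕ) < N (i + 1) then some (x j) else none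

lemma overflowWord_eq_some_iff {j : Fin M} {a : A} : overflowWord N x K M j = some a ↔
    (∃ i, N i + K ≤ j ∧ (j : ℕ) < N (i + 1)) ∧ x j = a := by
  simp only [overflowWord]
  split_ifs with h <;> simp [h]

lemma le_of_overflowWord_eq (hN : Monotone N) (hK : 0 < K) {i : ℕ}
    (hblock : ∀ r < K, ∀ a, (N i + r < N (i + 1) ∧ x (N i + r) = a) ↔
      (N' i + r < N' (i + 1) ∧ x' (N' i + r) = a))
    (hover : overflowWord N x K M = overflowWord N' x' K M)
    (hi : N i = N' i) (hlt : N (i + 1) < N' (i + 1)) : M ≤ N (i + 1) := by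
  have hmN : N i ≤ N (i + 1) := hN (Nat.le_succ i)
  by_contra! hdM
  rcases lt_or_ge (N (i + 1)) (N i + K) with h | h
  · have := (hblock (N (i + 1) - N i) (by omega) _).2 ⟨by omega, rfl⟩
    omega
  · have hsome := (overflowWord_eq_some_iff (x := x') (j := ⟨N (i + 1), hdM⟩)).2
      ⟨⟨i, hi ▸ h, hlt⟩, rfl⟩
    obtain ⟨⟨i', hi1, hi2⟩, -⟩ := overflowWord_eq_some_iff.1 ((congrFun hover _).trans hsome)
    simp only at hi1 hi2
    rcases lt_or_ge i' (i + 1) with h | h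
    · exact absurd (hN (show i' + 1 ≤ i + 1 from h)) hi2.not_ge
    · have := hN h
      omega

lemma eq_or_le_of_overflowWord_eq (hN : Monotone N) (hN' : Monotone N') (hK : 0 < K) {i : ℕ}
    (hblock : ∀ r < K, ∀ a, (N i + r < N (i + 1) ∧ x (N i + r) = a) ↔
      (N' i + r < N' (i + 1) ∧ x' (N' i + r) = a))
    (hover : overflowWord N x K M = overflowWord N' x' K M) (hi : N i = N' i) :
    N (i + 1) = N' (i + 1) ∨ M ≤ N (i + 1) ∧ M ≤ N' (i + 1) := by
  rcases lt_trichotomy (N (i + 1)) (N' (i + 1)) with hlt | heq | hgt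
  · have := le_of_overflowWord_eq hN hK hblock hover hi hlt
    exact Or.inr ⟨this, by omega⟩
  · exact Or.inl heq
  · have := le_of_overflowWord_eq hN' hK (fun r hr a => (hblock r hr a).symm) hover.symm hi.symm hgt
    exact Or.inr ⟨by omega, this⟩

lemma eq_of_forall_block_eq (hN : Monotone N) (hN' : Monotone N') (h0 : N 0 = 0) (h0' : N' 0 = 0)
    (hK : 0 < K) {n : ℕ} (hM : M ≤ N n)
    (hblock : ∀ i < n, ∀ r < K, ∀ a, (N i + r < N (i + 1) ∧ x (N i + r) = a) ↔
      (N' i + r < N' (i + 1) ∧ x' (N' i + r) = a))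
    (hover : overflowWord N x K M = overflowWord N' x' K M) : ∀ j < M, x j = x' j := by
  have key : ∀ i ≤ n, (N i = N' i ∨ (M ≤ N i ∧ M ≤ N' i)) ∧ ∀ j < M, j < N i → x j = x' j := by
    intro i
    induction i with
    | zero => intro _; exact ⟨Or.inl (h0.trans h0'.symm), fun j _ hj => by omega⟩
    | succ i ih =>
      intro hi
      obtain ⟨hcut, hprefix⟩ := ih (by omega)
      have hmN : N i ≤ N (i + 1) := hN (Nat.le_succ i)
      have hmN' : N' i ≤ N' (i + 1) := hN' (Nat.le_succ i)
      rcases hcut with hcut | ⟨hcut, hcut'⟩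
      · refine ⟨eq_or_le_of_overflowWord_eq hN hN' hK (hblock i (by omega)) hover hcut,
          fun j hjM hj => ?_⟩
        rcases lt_or_ge j (N i) with h | h
        · exact hprefix j hjM h
        rcases lt_or_ge j (N i + K) with hjK | hjK
        · have := ((hblock i (by omega) (j - N i) (by omega) (x j)).1
            ⟨by omega, by rw [Nat.add_sub_cancel' h]⟩).2
          rw [← hcut, Nat.add_sub_cancel' h] at this
          exact this.symm
        · have hsome := (overflowWord_eq_some_iff (x := x) (j := ⟨j, hjM⟩)).2 ⟨⟨i, hjK, hj⟩, rfl⟩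
          exact (overflowWord_eq_some_iff.1 ((congrFun hover _).symm.trans hsome)).2.symm
      · exact ⟨Or.inr ⟨by omega, by omega⟩, fun j hjM _ => hprefix j hjM (by omega)⟩
  exact fun j hj => (key n le_rfl).2 j hj (by omega)

end BlockCoding

section Crossings

variable {X A : Type*} {T : X → X} {f : X → ℝ} {ξ : X → A} {z : X × ℝ}

/-- The number of times the orbit of `z` under the suspension flow has passed the roof by time `i`;
meaningful when the Birkhoff sums of `f` along the base orbit are unbounded. -/
noncomputable def crossings (T : X → X) (f : X → ℝ) (z : X × ℝ) (i : ℕ) : ℕ :=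
  sSup {j | birkhoffSum T f j z.1 ≤ z.2 + i}

lemma measurable_birkhoffSum [MeasurableSpace X] (hT : Measurable T) (hf : Measurable f) (n : ℕ) :
    Measurable (birkhoffSum T f n) :=
  Finset.measurable_fun_sum _ fun i _ => hf.comp (hT.iterate i)

lemma monotone_birkhoffSum (hf0 : 0 ≤ f) (x : X) : Monotone fun j => birkhoffSum T f j x :=
  monotone_nat_of_le_succ fun j => by
    rw [birkhoffSum_succ]
    exact le_add_of_nonneg_right (hf0 _)

lemma le_crossings_iff (hf0 : 0 ≤ f) (hz : 0 ≤ z.2)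
    (hrec : Tendsto (birkhoffSum T f · z.1) atTop atTop) (i j : ℕ) :
    j ≤ crossings T f z i ↔ birkhoffSum T f j z.1 ≤ z.2 + i := by
  have hmono := monotone_birkhoffSum (T := T) hf0 z.1
  have hbdd : BddAbove {j | birkhoffSum T f j z.1 ≤ z.2 + i} := by
    obtain ⟨b, hb⟩ := (hrec.eventually_gt_atTop (z.2 + i)).exists
    exact ⟨b, fun j hj => (hmono.reflect_lt (hj.trans_lt hb)).le⟩
  refine ⟨fun h => (hmono h).trans ?_, le_csSup hbdd⟩
  exact Nat.sSup_mem (s := {j | birkhoffSum T f j z.1 ≤ z.2 + i})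
    ⟨0, by simpa using add_nonneg hz i.cast_nonneg⟩ hbdd

lemma monotone_crossings (hf0 : 0 ≤ f) (hz : 0 ≤ z.2)
    (hrec : Tendsto (birkhoffSum T f · z.1) atTop atTop) : Monotone (crossings T f z) := by
  intro i i' hi
  have := (le_crossings_iff hf0 hz hrec i _).1 le_rfl
  exact (le_crossings_iff hf0 hz hrec i' _).2 (this.trans (by gcongr))

lemma crossings_zero (hf0 : 0 ≤ f) (hz : z ∈ suspDom f)
    (hrec : Tendsto (birkhoffSum T f · z.1) atTop atTop) : crossings T f z 0 = 0 := by
  by_contra! h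
  have := (le_crossings_iff hf0 hz.1 hrec 0 1).1 (Nat.one_le_iff_ne_zero.2 h)
  rw [birkhoffSum_one, Nat.cast_zero, add_zero] at this
  exact hz.2.not_ge this

lemma suspStep_crossings_mem_suspDom (hf0 : 0 ≤ f) (hz : 0 ≤ z.2)
    (hrec : Tendsto (birkhoffSum T f · z.1) atTop atTop) (i : ℕ) :
    (suspStep T f)^[crossings T f z i] (vert i z) ∈ suspDom f := by
  have h1 := (le_crossings_iff hf0 hz hrec i _).1 le_rfl
  have h2 := mt (le_crossings_iff hf0 hz hrec i (crossings T f z i + 1)).2 (by omega)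
  rw [birkhoffSum_succ] at h2
  rw [suspStep_iterate]
  exact ⟨by simp only [vert]; linarith, by simp only [vert]; linarith⟩

/-- The points of the fundamental domain that pass the roof more than `r` times within one unit of
time, and whose `r`-th symbol is `a`. -/
def crossSet (T : X → X) (f : X → ℝ) (ξ : X → A) (r : ℕ) (a : A) : Set (X × ℝ) :=
  {z | z ∈ suspDom f ∧ birkhoffSum T f (r + 1) z.1 ≤ z.2 + 1 ∧ ξ (T^[r] z.1) = a}

/-- The observable of the suspension space recording the first `K` symbols read during one unit of
time, as the relation between positions and symbols. -/
def blockObs (T : X → X) (f : X → ℝ) (ξ : X → A) (K : ℕ) (y : SuspSpace T f) : Fin K × A → Prop :=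
  fun ra => y ∈ Quot.mk _ '' crossSet T f ξ ra.1 ra.2

lemma blockObs_vert_iff (hT : Function.Injective T) (hf0 : 0 ≤ f) (hz : 0 ≤ z.2)
    (hrec : Tendsto (birkhoffSum T f · z.1) atTop atTop) {K : ℕ} (i : ℕ) (r : Fin K) (a : A) :
    blockObs T f ξ K (Quot.mk _ (vert i z)) (r, a) ↔
      crossings T f z i + r < crossings T f z (i + 1)
        ∧ ξ (T^[crossings T f z i + r] z.1) = a := by
  have hD := suspStep_crossings_mem_suspDom hf0 hz hrec i
  rw [blockObs, ← mk_suspStep_iterate (crossings T f z i),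
    (injOn_mk_suspDom hT hf0).mem_image_iff (fun w hw => hw.1) hD, ← Nat.add_one_le_iff,
    le_crossings_iff hf0 hz hrec, crossSet, Set.mem_ofPred_eq, and_iff_right hD, suspStep_iterate,
    add_assoc, birkhoffSum_add T f (crossings T f z i), ← Function.iterate_add_apply,
    add_comm (r : ℕ) (crossings T f z i)]
  refine and_congr_left fun _ => ?_
  simp only [vert, Nat.cast_succ]
  constructor <;> intro h <;> linarith

lemma measurableSet_crossSet [MeasurableSpace X] [MeasurableSpace A] [MeasurableSingletonClass A]
    (hT : Measurable T) (hf : Measurable f) (hξ : Measurable ξ) (r : ℕ) (a : A) :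
    MeasurableSet (crossSet T f ξ r a) := by
  have hS : Measurable (birkhoffSum T f (r + 1)) := measurable_birkhoffSum hT hf _
  exact (measurableSet_suspDom hf).inter ((measurableSet_le (hS.comp measurable_fst)
    (measurable_snd.add_const 1)).inter ((hξ.comp (hT.iterate r)).comp measurable_fst
      (measurableSet_singleton a)))

lemma measurable_blockObs [MeasurableSpace X] [MeasurableSpace A] [MeasurableSingletonClass A]
    (T : X ≃ᵐ X) (hf : Measurable f) (hξ : Measurable ξ) (K : ℕ) :
    Measurable (blockObs T f ξ K) :=
  measurable_pi_lambda _ fun _ => measurableSet_setOfPred.1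
    (measurableSet_mk_image T hf (measurableSet_crossSet T.measurable hf hξ _ _))

lemma itinerary_eq_of_blockObs_eq (hT : Function.Injective T) (hf0 : 0 ≤ f) {w : X × ℝ}
    (hz : z ∈ suspDom f) (hw : w ∈ suspDom f)
    (hzrec : Tendsto (birkhoffSum T f · z.1) atTop atTop)
    (hwrec : Tendsto (birkhoffSum T f · w.1) atTop atTop) {K M n : ℕ} (hK : 0 < K)
    (hM : birkhoffSum T f M z.1 ≤ n)
    (hblock : ∀ i < n, blockObs T f ξ K (Quot.mk _ (vert i z))
      = blockObs T f ξ K (Quot.mk _ (vert i w)))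
    (hover : overflowWord (crossings T f z) (fun j => ξ (T^[j] z.1)) K M
      = overflowWord (crossings T f w) (fun j => ξ (T^[j] w.1)) K M) :
    itinerary T ξ M z.1 = itinerary T ξ M w.1 := by
  have hMn : M ≤ crossings T f z n :=
    (le_crossings_iff hf0 hz.1 hzrec n M).2 (hM.trans (le_add_of_nonneg_left hz.1))
  refine funext fun j => eq_of_forall_block_eq (x := fun j => ξ (T^[j] z.1))
    (x' := fun j => ξ (T^[j] w.1)) (monotone_crossings hf0 hz.1 hzrec)
    (monotone_crossings hf0 hw.1 hwrec) (crossings_zero hf0 hz hzrec) (crossings_zero hf0 hw hwrec)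
    hK hMn (fun i hi r hr a => ?_) hover j j.2
  rw [← blockObs_vert_iff hT hf0 hz.1 hzrec i ⟨r, hr⟩, hblock i hi,
    blockObs_vert_iff hT hf0 hw.1 hwrec i ⟨r, hr⟩]

lemma birkhoffSum_lt_one_of_crossings_add_le (hf0 : 0 ≤ f) (hz : 0 ≤ z.2)
    (hrec : Tendsto (birkhoffSum T f · z.1) atTop atTop) {K i j : ℕ}
    (h1 : crossings T f z i + K ≤ j) (h2 : j < crossings T f z (i + 1)) :
    birkhoffSum T f K (T^[j + 1 - K] z.1) < 1 := by
  have h3 := (le_crossings_iff hf0 hz hrec (i + 1) (j + 1)).1 h2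
  have h4 := mt (le_crossings_iff hf0 hz hrec i (j + 1 - K)).2 (by omega)
  rw [show j + 1 = j + 1 - K + K by omega, birkhoffSum_add] at h3
  push_cast at h3
  linarith

open Classical in
lemma hammingDist_overflowWord_le (hf0 : 0 ≤ f) (hz : 0 ≤ z.2)
    (hrec : Tendsto (birkhoffSum T f · z.1) atTop atTop) (x : ℕ → A) (K M : ℕ) :
    hammingDist (overflowWord (crossings T f z) x K M) (fun _ => none)
      ≤ {j ∈ Finset.range M | birkhoffSum T f K (T^[j + 1 - K] z.1) < 1}.card := by
  refine Finset.card_le_card_of_injOn (fun j => (j : ℕ)) (fun j hj => ?_)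
    fun _ _ _ _ h => Fin.ext h
  obtain ⟨a, ha⟩ := Option.ne_none_iff_exists'.1 (Finset.mem_filter.1 hj).2
  obtain ⟨⟨i, h1, h2⟩, -⟩ := overflowWord_eq_some_iff.1 ha
  exact Finset.mem_coe.2 (Finset.mem_filter.2 ⟨Finset.mem_range.2 j.2,
    birkhoffSum_lt_one_of_crossings_add_le hf0 hz hrec h1 h2⟩)

end Crossings

section ConvergenceInMeasure

variable {Ω ι : Type*} [MeasurableSpace Ω] {μ : Measure Ω} [IsFiniteMeasure μ] {F : ι → Ω → ℝ}
  {l : Filter ι} {b : ι → ℝ} {b₀ c : ℝ}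

lemma measureReal_mono_ae {s t : Set Ω} (h : s ≤ᵐ[μ] t) :
    μ.real s ≤ μ.real t :=
  ENNReal.toReal_mono (by finiteness) (measure_mono_ae h)

lemma tendsto_measureReal_le_of_lt (hF : TendstoInMeasure μ F l fun _ => c)
    (hb : Tendsto b l (𝓝 b₀)) (hbc : b₀ < c) :
    Tendsto (fun i => μ.real {x | F i x ≤ b i}) l (𝓝 0) := by
  refine tendsto_of_tendsto_of_tendsto_of_le_of_le' tendsto_const_nhds
    (tendstoInMeasure_iff_measureReal_dist.1 hF ((c - b₀) / 2) (by linarith))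
    (Eventually.of_forall fun i => measureReal_nonneg) ?_
  filter_upwards [hb.eventually_le_const (show b₀ < (b₀ + c) / 2 by linarith)] with i hi
  refine measureReal_mono fun x (hx : F i x ≤ b i) => ?_
  rw [Set.mem_ofPred_eq, dist_comm, Real.dist_eq]
  linarith [le_abs_self (c - F i x)]

lemma tendsto_measureReal_ge_of_lt (hF : TendstoInMeasure μ F l fun _ => c)
    (hb : Tendsto b l (𝓝 b₀)) (hbc : c < b₀) :
    Tendsto (fun i => μ.real {x | b i ≤ F i x}) l (𝓝 0) := by
  have hneg : TendstoInMeasure μ (fun i x => -F i x) l fun _ => -c :=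
    tendstoInMeasure_iff_dist.2 fun δ hδ => by
      simpa only [dist_neg_neg] using tendstoInMeasure_iff_dist.1 hF δ hδ
  simpa only [neg_le_neg_iff] using tendsto_measureReal_le_of_lt hneg hb.neg (neg_lt_neg hbc)

lemma tendsto_natFloor_mul_div {a : ℝ} (ha : 0 ≤ a) :
    Tendsto (fun n : ℕ => (⌊a * n⌋₊ : ℝ) / n) atTop (𝓝 a) :=
  (tendsto_nat_floor_mul_div_atTop ha).comp tendsto_natCast_atTop_atTop

lemma tendsto_natFloor_mul_atTop {a : ℝ} (ha : 0 < a) :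
    Tendsto (fun n : ℕ => ⌊a * n⌋₊) atTop atTop :=
  tendsto_nat_floor_atTop.comp (tendsto_natCast_atTop_atTop.const_mul_atTop ha)

open Classical in
lemma mul_measureReal_card_filter_mem_ge_le {s : Finset ι} {E : ι → Set Ω}
    (hE : ∀ i ∈ s, MeasurableSet (E i)) (a : ℝ) :
    a * μ.real {x | a ≤ ({i ∈ s | x ∈ E i}.card : ℝ)} ≤ ∑ i ∈ s, μ.real (E i) := by
  have hcard : ∀ x, ({i ∈ s | x ∈ E i}.card : ℝ) = ∑ i ∈ s, (E i).indicator 1 x := fun x => by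
    simp [Set.indicator_apply]
  have hint : ∀ i ∈ s, Integrable ((E i).indicator (1 : Ω → ℝ)) μ := fun i hi =>
    (integrable_const 1).indicator (hE i hi)
  calc a * μ.real {x | a ≤ ({i ∈ s | x ∈ E i}.card : ℝ)}
      ≤ ∫ x, ∑ i ∈ s, (E i).indicator 1 x ∂μ := by
        simp only [hcard]
        exact mul_meas_ge_le_integral_of_nonneg (ae_of_all _ fun x => Finset.sum_nonneg fun i _ =>
          Set.indicator_nonneg (fun _ _ => zero_le_one) x) (integrable_finsetSum s hint) a
    _ = ∑ i ∈ s, μ.real (E i) := by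
        rw [integral_finsetSum s hint]
        exact Finset.sum_congr rfl fun i hi => integral_indicator_one (hE i hi)

end ConvergenceInMeasure

section LimitTheorems

variable {X : Type*} [MeasurableSpace X]

/-- The weak law of large numbers for the observable `f` of the system `(T, m)`. -/
def LawOfLargeNumbers (T : X → X) (m : Measure X) (f : X → ℝ) : Prop :=
  TendstoInMeasure m (fun n => birkhoffAverage ℝ T f n) atTop fun _ => ∫ x, f x ∂m

/-- The asymptotic equipartition property with entropy `h`: the information of the first `n` symbols
of the `ξ`-itinerary, divided by `n`, converges to `h` in measure. Words of probability zero, for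
which `Real.log` takes the value `0`, form a null set. -/
def EquipartitionProperty {A : Type*} [MeasurableSpace A] (T : X → X) (m : Measure X) (ξ : X → A)
    (h : ℝ) : Prop :=
  TendstoInMeasure m
    (fun n x => -Real.log ((m.map (itinerary T ξ n)).real {itinerary T ξ n x}) / n) atTop
    fun _ => h

variable {T : X → X} {m : Measure X} {f : X → ℝ}

namespace LawOfLargeNumbers

lemma ae_tendsto_birkhoffSum (hT : LawOfLargeNumbers T m f) (hf0 : 0 ≤ f)
    (hfc : 0 < ∫ x, f x ∂m) : ∀ᵐ x ∂m, Tendsto (birkhoffSum T f · x) atTop atTop := by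
  obtain ⟨ns, hns, hlim⟩ := hT.exists_seq_tendsto_ae
  filter_upwards [hlim] with x hx
  have hsub : Tendsto (fun i => birkhoffSum T f (ns i) x) atTop atTop := by
    refine ((tendsto_natCast_atTop_atTop.comp hns.tendsto_atTop).atTop_mul_pos hfc hx).congr' ?_
    filter_upwards [hns.tendsto_atTop.eventually_gt_atTop 0] with i hi
    have : (ns i : ℝ) ≠ 0 := by exact_mod_cast hi.ne'
    simp [birkhoffAverage, this]
  exact tendsto_atTop_of_monotone_of_filter (l := map ns atTop) (monotone_birkhoffSum hf0 x) hsub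

variable [IsFiniteMeasure m] {M : ℕ → ℕ} {a b : ℝ}

lemma tendsto_measureReal_birkhoffSum_le (hT : LawOfLargeNumbers T m f) (ha : 0 < a)
    (hM : Tendsto M atTop atTop) (hMa : Tendsto (fun n => (M n : ℝ) / n) atTop (𝓝 a))
    (hb : b < a * ∫ x, f x ∂m) :
    Tendsto (fun n => m.real {x | birkhoffSum T f (M n) x ≤ b * n}) atTop (𝓝 0) := by
  refine (tendsto_measureReal_le_of_lt (hT.comp hM) (tendsto_const_nhds.div hMa ha.ne')
    ((div_lt_iff₀' ha).2 hb)).congr' ?_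
  filter_upwards [hM.eventually_gt_atTop 0] with n hM0
  have : (0 : ℝ) < M n := by exact_mod_cast hM0
  simp only [Function.comp_apply, birkhoffAverage, smul_eq_mul, inv_mul_le_iff₀ this,
    Pi.div_apply, div_div_eq_mul_div, mul_div_cancel₀ _ this.ne']

lemma tendsto_measureReal_birkhoffSum_ge (hT : LawOfLargeNumbers T m f) (ha : 0 < a)
    (hM : Tendsto M atTop atTop) (hMa : Tendsto (fun n => (M n : ℝ) / n) atTop (𝓝 a))
    (hb : a * ∫ x, f x ∂m < b) :
    Tendsto (fun n => m.real {x | b * n ≤ birkhoffSum T f (M n) x}) atTop (𝓝 0) := by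
  refine (tendsto_measureReal_ge_of_lt (hT.comp hM) (tendsto_const_nhds.div hMa ha.ne')
    ((lt_div_iff₀' ha).2 hb)).congr' ?_
  filter_upwards [hM.eventually_gt_atTop 0] with n hM0
  have : (0 : ℝ) < M n := by exact_mod_cast hM0
  simp only [Function.comp_apply, birkhoffAverage, smul_eq_mul, le_inv_mul_iff₀ this,
    Pi.div_apply, div_div_eq_mul_div, mul_div_cancel₀ _ this.ne']

lemma exists_measureReal_birkhoffSum_lt_le (hT : LawOfLargeNumbers T m f)
    (hfc : 0 < ∫ x, f x ∂m) (s : ℝ) {δ : ℝ} (hδ : 0 < δ) :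
    ∃ K > 0, m.real {x | birkhoffSum T f K x < s} ≤ δ := by
  have hlim := tendsto_measureReal_le_of_lt hT
    (tendsto_const_div_atTop_nhds_zero_nat s) hfc
  obtain ⟨K, hK, hK0⟩ := ((hlim.eventually_le_const hδ).and (eventually_gt_atTop 0)).exists
  refine ⟨K, hK0, (measureReal_mono fun x (hx : _ < s) => ?_).trans hK⟩
  rw [Set.mem_ofPred_eq, birkhoffAverage, smul_eq_mul, inv_mul_eq_div]
  gcongr

end LawOfLargeNumbers

lemma ae_measureReal_map_singleton_ne_zero {β : Type*} [MeasurableSpace β]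
    [MeasurableSingletonClass β] [Countable β] [IsFiniteMeasure m] {F : X → β}
    (hF : AEMeasurable F m) : ∀ᵐ x ∂m, (m.map F).real {F x} ≠ 0 :=
  ae_of_ae_map hF (ae_iff_of_countable.2 fun _ hb => (measureReal_ne_zero_iff).2 hb)

lemma EquipartitionProperty.tendsto_measureReal_lt_exp {A : Type*} [MeasurableSpace A]
    [MeasurableSingletonClass A] [Countable A] [IsFiniteMeasure m] {ξ : X → A} {h h' : ℝ}
    (haep : EquipartitionProperty T m ξ h) (hT : Measurable T) (hξ : Measurable ξ) (hh : h < h') :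
    Tendsto (fun n : ℕ => m.real {x |
      (m.map (itinerary T ξ n)).real {itinerary T ξ n x} < Real.exp (-(n * h'))}) atTop (𝓝 0) := by
  refine tendsto_of_tendsto_of_tendsto_of_le_of_le' tendsto_const_nhds
    (tendsto_measureReal_ge_of_lt haep tendsto_const_nhds hh)
    (Eventually.of_forall fun n => measureReal_nonneg) ?_
  filter_upwards [eventually_gt_atTop 0] with n hn
  refine measureReal_mono_ae ?_
  filter_upwards [ae_measureReal_map_singleton_ne_zero
    (measurable_itinerary hT hξ n).aemeasurable (m := m)] with x hx hlt
  have hpos := measureReal_nonneg.lt_of_ne' hx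
  refine (le_div_iff₀' (by exact_mod_cast hn)).2 (le_neg.1 ?_)
  exact ((Real.log_lt_iff_lt_exp hpos).2 hlt).le

end LimitTheorems

section LowerBound

variable {X A : Type*} [MeasurableSpace X] [MeasurableSpace A] {m : Measure X} {f : X → ℝ}
  {ξ : X → A}

open Classical in
/-- The base points whose first `M` symbols are read by time `n`, have probability at most `q`, and
are all but at most `r` seen when only `K` symbols are recorded per unit of time. -/
def codablePoints (T : X → X) (m : Measure X) (f : X → ℝ) (ξ : X → A) (K M n : ℕ) (r q : ℝ) :
    Set X :=
  {x | Tendsto (birkhoffSum T f · x) atTop atTop ∧ birkhoffSum T f M x ≤ n ∧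
    ({j ∈ Finset.range M | birkhoffSum T f K (T^[j + 1 - K] x) < 1}.card : ℝ) ≤ r ∧
    (m.map (itinerary T ξ M)).real {itinerary T ξ M x} ≤ q}

variable {T : X ≃ᵐ X} [IsProbabilityMeasure m]

open Classical in
lemma mul_measureReal_card_birkhoffSum_lt_one_ge_le (hT : MeasurePreserving T m m)
    (hf : Measurable f) (K M : ℕ) (a : ℝ) :
    a * m.real {x | a
      ≤ ({j ∈ Finset.range M | birkhoffSum T f K (T^[j + 1 - K] x) < 1}.card : ℝ)}
      ≤ M * m.real {x | birkhoffSum T f K x < 1} := by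
  have hshort : MeasurableSet {x | birkhoffSum T f K x < 1} :=
    measurableSet_lt (measurable_birkhoffSum T.measurable hf K) measurable_const
  refine (mul_measureReal_card_filter_mem_ge_le (μ := m) (s := Finset.range M)
    (E := fun j => T^[j + 1 - K] ⁻¹' {x | birkhoffSum T f K x < 1})
    (fun j _ => (T.measurable.iterate _) hshort) a).trans_eq ?_
  simp only [(hT.iterate _).measureReal_preimage hshort.nullMeasurableSet, Finset.sum_const,
    Finset.card_range, nsmul_eq_mul]

lemma exists_eventually_measureReal_compl_codablePoints_le (hT : MeasurePreserving T m m)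
    (hf0 : 0 ≤ f) (hf : Measurable f) (hfc : 0 < ∫ x, f x ∂m) (hlln : LawOfLargeNumbers T m f)
    {h : ℝ} (haep : EquipartitionProperty T m ξ h) {a : ℝ} (ha : 0 < a)
    (hac : a * ∫ x, f x ∂m < 1) {η : ℝ} (hη : 0 < η) {h' : ℝ} (hh : h' < h) {δ : ℝ} (hδ : 0 < δ) :
    ∃ K > 0, ∀ᶠ n : ℕ in atTop, m.real (codablePoints T m f ξ K ⌊a * n⌋₊ n (η * ⌊a * n⌋₊)
      (Real.exp (-(⌊a * n⌋₊ * h'))))ᶜ ≤ δ := by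
  classical
  obtain ⟨K, hK0, hK⟩ := hlln.exists_measureReal_birkhoffSum_lt_le hfc 1
    (show 0 < η * (δ / 3) by positivity)
  refine ⟨K, hK0, ?_⟩
  have hMtop := tendsto_natFloor_mul_atTop ha
  have hlong := (hlln.tendsto_measureReal_birkhoffSum_ge ha hMtop (tendsto_natFloor_mul_div ha.le)
    hac).eventually_le_const (show 0 < δ / 3 by positivity)
  have hinfo := ((tendsto_measureReal_le_of_lt haep tendsto_const_nhds hh).comp
    hMtop).eventually_le_const (show 0 < δ / 3 by positivity)
  have hrec : m.real {x | ¬ Tendsto (birkhoffSum T f · x) atTop atTop} = 0 :=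
    measureReal_eq_zero_iff (by finiteness) |>.2 (ae_iff.1 (hlln.ae_tendsto_birkhoffSum hf0 hfc))
  filter_upwards [hlong, hinfo, hMtop.eventually_gt_atTop 0] with n hlongn hinfon hM
  set M := ⌊a * n⌋₊
  have hM' : (0 : ℝ) < M := by exact_mod_cast hM
  have hlost := mul_measureReal_card_birkhoffSum_lt_one_ge_le hT hf K M (η * M)
  have hlost' : m.real {x | η * M
      ≤ ({j ∈ Finset.range M | birkhoffSum T f K (T^[j + 1 - K] x) < 1}.card : ℝ)} ≤ δ / 3 := by
    refine le_of_mul_le_mul_left (hlost.trans ?_) (show 0 < η * M by positivity)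
    calc M * m.real {x | birkhoffSum T f K x < 1} ≤ M * (η * (δ / 3)) := by gcongr
      _ = η * M * (δ / 3) := by ring
  have hsub : (codablePoints T m f ξ K M n (η * M) (Real.exp (-(M * h'))))ᶜ
      ⊆ ({x | ¬ Tendsto (birkhoffSum T f · x) atTop atTop} ∪ {x | 1 * n ≤ birkhoffSum T f M x})
        ∪ ({x | η * M ≤ ({j ∈ Finset.range M | birkhoffSum T f K (T^[j + 1 - K] x) < 1}.card : ℝ)}
          ∪ {x | -Real.log ((m.map (itinerary T ξ M)).real {itinerary T ξ M x}) / M ≤ h'}) := by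
    intro x hx
    by_contra hcon
    simp only [Set.mem_union, Set.mem_ofPred_eq, not_or, not_not, not_le, one_mul,
      lt_div_iff₀ hM'] at hcon
    obtain ⟨⟨hx1, hx2⟩, hx3, hx4⟩ := hcon
    refine hx ⟨hx1, hx2.le, hx3.le, ?_⟩
    rcases (measureReal_nonneg (μ := m.map (itinerary T ξ M))
      (s := {itinerary T ξ M x})).eq_or_lt with h0 | h0
    · rw [← h0]; positivity
    · rw [← Real.log_le_iff_le_exp h0]
      linarith
  calc _ ≤ (0 + δ / 3) + (δ / 3 + δ / 3) := by
        refine (measureReal_mono hsub).trans ((measureReal_union_le _ _).trans ?_)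
        exact add_le_add ((measureReal_union_le _ _).trans (add_le_add hrec.le hlongn))
          ((measureReal_union_le _ _).trans (add_le_add hlost' hinfon))
    _ = δ := by ring

variable [MeasurableSingletonClass A]

lemma measureReal_le_of_forall_itinerary_eq (hξ : Measurable ξ) {M : ℕ} {q : ℝ} (hq : 0 ≤ q)
    {E : Set X} (hE : ∀ x ∈ E, ∀ y ∈ E, itinerary T ξ M x = itinerary T ξ M y)
    (hEq : ∀ x ∈ E, (m.map (itinerary T ξ M)).real {itinerary T ξ M x} ≤ q) : m.real E ≤ q := by
  rcases E.eq_empty_or_nonempty with rfl | ⟨x, hx⟩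
  · simpa using hq
  · refine le_trans ?_ (hEq x hx)
    rw [map_measureReal_apply (measurable_itinerary T.measurable hξ M) (measurableSet_singleton _)]
    exact measureReal_mono fun y hy => hE y hy x hx

open Classical in
lemma measureReal_domMeasure_fiber_le (hf0 : 0 ≤ f) (hf : Measurable f) (hfc : 0 < ∫ x, f x ∂m)
    {C : ℝ} (hC : 0 ≤ C) (hfC : ∀ x, f x ≤ C) (hξ : Measurable ξ) {K M n : ℕ} (hK : 0 < K)
    {r q : ℝ} (hq : 0 ≤ q) {B : Finset (Fin M → Option A)}
    (hB : ∀ w, (hammingDist w (fun _ => none) : ℝ) ≤ r → w ∈ B) {S : Set (X × ℝ)}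
    (hS : S ⊆ suspDom f ∩ Prod.fst ⁻¹' codablePoints T m f ξ K M n r q)
    (hblock : ∀ z ∈ S, ∀ w ∈ S, ∀ i < n, blockObs T f ξ K (Quot.mk _ (vert i z))
      = blockObs T f ξ K (Quot.mk _ (vert i w))) :
    (domMeasure f m).real S ≤ C / (∫ x, f x ∂m) * (B.card * q) := by
  have := isProbabilityMeasure_domMeasure hf0 hf hfc
  set lost : X × ℝ → Fin M → Option A :=
    fun z => overflowWord (crossings T f z) (fun j => ξ (T^[j] z.1)) K M
  set E : (Fin M → Option A) → Set X := fun w => Prod.fst '' {z ∈ S | lost z = w}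
  have hEq : ∀ w, m.real (E w) ≤ q := by
    refine fun w => measureReal_le_of_forall_itinerary_eq (T := T) hξ (M := M) hq ?_ ?_
    · rintro _ ⟨z, ⟨hz, hzw⟩, rfl⟩ _ ⟨y, ⟨hy, hyw⟩, rfl⟩
      exact itinerary_eq_of_blockObs_eq T.injective hf0 (hS hz).1 (hS hy).1 (hS hz).2.1 (hS hy).2.1
        hK (hS hz).2.2.1 (hblock z hz y hy) (hzw.trans hyw.symm)
    · rintro _ ⟨z, ⟨hz, -⟩, rfl⟩
      exact (hS hz).2.2.2.2
  have hsub : S ⊆ Prod.fst ⁻¹' ⋃ w ∈ B, E w := fun z hz => by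
    refine Set.mem_biUnion (hB (lost z) (le_trans ?_ (hS hz).2.2.2.1)) ⟨z, ⟨hz, rfl⟩, rfl⟩
    exact_mod_cast hammingDist_overflowWord_le hf0 (hS hz).1.1 (hS hz).2.1 _ K M
  calc (domMeasure f m).real S ≤ (domMeasure f m).real (Prod.fst ⁻¹' ⋃ w ∈ B, E w) :=
        measureReal_mono hsub
    _ ≤ C / (∫ x, f x ∂m) * m.real (⋃ w ∈ B, E w) :=
        measureReal_domMeasure_fst_preimage_le hf hfc hfC _
    _ ≤ C / (∫ x, f x ∂m) * (B.card * q) := by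
        gcongr
        refine (measureReal_biUnion_finset_le B E).trans ?_
        simpa using Finset.sum_le_sum fun w (_ : w ∈ B) => hEq w

lemma exists_eventually_le_shannonEnt [Finite A] (hT : MeasurePreserving T m m)
    (hf0 : 0 ≤ f) (hf : Measurable f) (hfc : 0 < ∫ x, f x ∂m) {C : ℝ} (hfC : ∀ x, f x ≤ C)
    (hlln : LawOfLargeNumbers T m f) (hξ : Measurable ξ) {h : ℝ}
    (haep : EquipartitionProperty T m ξ h) {a : ℝ} (ha : 0 < a) (hac : a * ∫ x, f x ∂m < 1)
    {ε : ℝ} (hε : 0 < ε) (hεh : 3 * ε < h) :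
    ∃ (k : ℕ) (P : SuspSpace T f → Fin k), Measurable P ∧ ∀ᶠ n : ℕ in atTop,
      (1 - 2 * ε) * (⌊a * n⌋₊ * (h - 3 * ε))
        ≤ shannonEnt ((suspMeasure T f m).map (itinerary (suspFlow T f 1) P n)) := by
  have := Fintype.ofFinite A
  classical
  have := isProbabilityMeasure_domMeasure hf0 hf hfc
  have hC := pos_of_integral_pos_of_forall_le hfc hfC
  obtain ⟨η, hη, hball⟩ := exists_card_le_exp_of_hammingDist_le (Option A) hε
  obtain ⟨K, hK, hgood⟩ := exists_eventually_measureReal_compl_codablePoints_le hT hf0 hf hfc hlln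
    haep ha hac hη (show h - ε < h by linarith) (show 0 < ε / (C / ∫ x, f x ∂m) by positivity)
  set e := Fintype.equivFin (Fin K × A → Prop)
  have hP : Measurable (e ∘ blockObs T f ξ K) :=
    (Measurable.of_discrete (f := e)).comp (measurable_blockObs T hf hξ K)
  refine ⟨_, e ∘ blockObs T f ξ K, hP, ?_⟩
  have hdecay : Tendsto (fun n : ℕ => C / (∫ x, f x ∂m) * Real.exp (-(⌊a * n⌋₊ * ε))) atTop
      (𝓝 (C / (∫ x, f x ∂m) * 0)) :=
    (Real.tendsto_exp_neg_atTop_nhds_zero.comp ((tendsto_natCast_atTop_atTop.comp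
      (tendsto_natFloor_mul_atTop ha)).atTop_mul_const hε)).const_mul _
  rw [mul_zero] at hdecay
  filter_upwards [hgood, hdecay.eventually_le_const hε] with n hgoodn hdecayn
  set M := ⌊a * n⌋₊
  set G := suspDom f
    ∩ Prod.fst ⁻¹' codablePoints T m f ξ K M n (η * M) (Real.exp (-(M * (h - ε))))
  have hGc : (domMeasure f m).real Gᶜ ≤ ε :=
    (measureReal_domMeasure_compl_suspDom_inter_le hf hfc hfC _).trans
      ((le_div_iff₀' (by positivity)).1 hgoodn)
  rw [map_itinerary_suspMeasure m hP, show (M : ℝ) * (h - 3 * ε) =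
    -Real.log (Real.exp (-(M * (h - 3 * ε)))) by rw [Real.log_exp, neg_neg]]
  refine mul_neg_log_le_shannonEnt_map ((measurable_itinerary (measurable_suspFlow T f 1) hP n).comp
    measurable_quot_mk) (Real.exp_pos _) (Real.exp_le_one_iff.2 (by nlinarith))
    (fun v => measureReal_domMeasure_fiber_le hf0 hf hfc hC.le hfC hξ hK (Real.exp_pos _).le
      (B := {w | (hammingDist w (fun _ => none) : ℝ) ≤ η * M}) (fun w hw => by simpa using hw)
      Set.inter_subset_right fun z hz w hw i hi => ?_) ?_ hGc
  · have := congrFun (hz.1.trans hw.1.symm) ⟨i, hi⟩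
    simpa [itinerary_suspFlow_mk] using this
  · have hcard : (Finset.card {w : Fin M → Option A | (hammingDist w (fun _ => none) : ℝ)
        ≤ η * M} : ℝ) ≤ Real.exp (ε * M) :=
      hball M (fun _ => none) _ fun w hw => (Finset.mem_filter.1 hw).2
    refine le_trans ?_ hdecayn
    calc _ ≤ C / (∫ x, f x ∂m) * (Real.exp (ε * M) * Real.exp (-(M * (h - ε))))
          / Real.exp (-(M * (h - 3 * ε))) := by gcongr
      _ = C / (∫ x, f x ∂m) * Real.exp (-(M * ε)) := by
        rw [mul_div_assoc, ← Real.exp_add, ← Real.exp_sub]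
        ring_nf

theorem ofReal_div_le_kolSinai_suspFlow [Finite A] (hT : MeasurePreserving T m m)
    (hf0 : 0 ≤ f) (hf : Measurable f) (hfc : 0 < ∫ x, f x ∂m) {C : ℝ} (hfC : ∀ x, f x ≤ C)
    (hlln : LawOfLargeNumbers T m f) (hξ : Measurable ξ) {h : ℝ}
    (haep : EquipartitionProperty T m ξ h) :
    ENNReal.ofReal (h / ∫ x, f x ∂m) ≤ kolSinai (suspFlow T f 1) (suspMeasure T f m) := by
  rcases le_or_gt h 0 with hh | hh
  · rw [ENNReal.ofReal_of_nonpos (div_nonpos_of_nonpos_of_nonneg hh hfc.le)]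
    exact zero_le
  set c := ∫ x, f x ∂m with hc
  have hcont : Tendsto (fun ε : ℝ =>
      ENNReal.ofReal ((1 - 2 * ε) * ((1 - ε) / c * (h - 3 * ε)))) (𝓝[>] 0)
      (𝓝 (ENNReal.ofReal ((1 - 2 * 0) * ((1 - 0) / c * (h - 3 * 0))))) :=
    (Continuous.tendsto (ENNReal.continuous_ofReal.comp (by fun_prop)) 0).mono_left
      nhdsWithin_le_nhds
  simp only [mul_zero, sub_zero, one_mul, one_div_mul_eq_div] at hcont
  refine le_of_tendsto hcont ?_
  filter_upwards [Ioo_mem_nhdsGT (show (0 : ℝ) < min 1 (h / 3) by positivity)] with ε hε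
  obtain ⟨hε1, hεh⟩ := lt_min_iff.1 hε.2
  have ha : 0 < (1 - ε) / c := div_pos (by linarith) hfc
  obtain ⟨k, P, hP, hent⟩ := exists_eventually_le_shannonEnt hT hf0 hf hfc hfC hlln hξ haep ha
    (by rw [← hc, div_mul_cancel₀ _ hfc.ne']; linarith [hε.1]) hε.1 (by linarith)
  refine le_trans ?_ (le_iSup_of_le k (le_iSup_of_le P (le_iSup_of_le hP le_rfl)))
  have hlim : Tendsto (fun n : ℕ => ENNReal.ofReal
      ((1 - 2 * ε) * (⌊(1 - ε) / c * n⌋₊ / n * (h - 3 * ε)))) atTop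
      (𝓝 (ENNReal.ofReal ((1 - 2 * ε) * ((1 - ε) / c * (h - 3 * ε))))) :=
    (ENNReal.continuous_ofReal.tendsto _).comp
      (((tendsto_natFloor_mul_div ha.le).mul_const _).const_mul _)
  rw [← hlim.liminf_eq]
  refine liminf_le_liminf ?_
  filter_upwards [hent] with n hn
  refine ENNReal.ofReal_le_ofReal ((le_of_eq ?_).trans
    (div_le_div_of_nonneg_right hn n.cast_nonneg))
  ring

end LowerBound

section Shift

variable {A : Type*}

/-- The left shift on bi-infinite sequences. -/
def shift (A : Type*) [MeasurableSpace A] : (ℤ → A) ≃ᵐ (ℤ → A) where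
  toFun u n := u (n + 1)
  invFun u n := u (n - 1)
  left_inv u := by simp
  right_inv u := by simp
  measurable_toFun := measurable_pi_lambda _ fun n => measurable_pi_apply (n + 1)
  measurable_invFun := measurable_pi_lambda _ fun n => measurable_pi_apply (n - 1)

lemma shift_iterate_apply [MeasurableSpace A] (n : ℕ) (u : ℤ → A) (i : ℤ) :
    (shift A)^[n] u i = u (i + n) := by
  induction n generalizing u with
  | zero => simp
  | succ n ih =>
    rw [Function.iterate_succ_apply, ih, Nat.cast_succ, ← add_assoc]
    rfl

lemma shift_symm_iterate_apply [MeasurableSpace A] (n : ℕ) (u : ℤ → A) (i : ℤ) :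
    (shift A).symm^[n] u i = u (i - n) := by
  induction n generalizing u with
  | zero => simp
  | succ n ih =>
    rw [Function.iterate_succ_apply, ih, Nat.cast_succ, ← sub_sub]
    rfl

end Shift

section CompactApproximation

lemma exists_isCompact_subset_preimage {Y κ : Type*} [TopologicalSpace Y] [MeasurableSpace Y]
    [T2Space Y] [OpensMeasurableSpace Y]
    {μ : Measure Y} [μ.InnerRegularCompactLTTop] [Finite κ] [MeasurableSpace κ]
    [MeasurableSingletonClass κ] {Q : Y → κ} (hQ : Measurable Q) {S : Set Y}
    (hS : MeasurableSet S) (hμS : μ S ≠ ∞) {θ : ℝ≥0∞} (hθ : θ ≠ 0) :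
    ∃ K : κ → Set Y, (∀ a, IsCompact (K a)) ∧ (∀ a, K a ⊆ Q ⁻¹' {a}) ∧ μ (S \ ⋃ a, K a) ≤ θ := by
  have := Fintype.ofFinite κ
  have hex (a : κ) : ∃ K ⊆ Q ⁻¹' {a} ∩ S, IsCompact K ∧
      μ ((Q ⁻¹' {a} ∩ S) \ K) < θ / Fintype.card κ :=
    ((hQ (measurableSet_singleton a)).inter hS).exists_isCompact_sdiff_lt
      (measure_ne_top_of_subset Set.inter_subset_right hμS)
      (ENNReal.div_pos hθ (ENNReal.natCast_ne_top _)).ne'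
  choose K hKsub hK hKμ using hex
  refine ⟨K, hK, fun a => (hKsub a).trans Set.inter_subset_left, ?_⟩
  have hcover : S \ ⋃ a, K a ⊆ ⋃ a, (Q ⁻¹' {a} ∩ S) \ K a := fun y hy =>
    Set.mem_iUnion.2 ⟨Q y, ⟨rfl, hy.1⟩, fun h => hy.2 (Set.mem_iUnion.2 ⟨_, h⟩)⟩
  calc μ (S \ ⋃ a, K a) ≤ ∑ a, μ ((Q ⁻¹' {a} ∩ S) \ K a) :=
        (measure_mono hcover).trans (measure_iUnion_fintype_le _ _)
    _ ≤ ∑ _a : κ, θ / Fintype.card κ := Finset.sum_le_sum fun a _ => (hKμ a).le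
    _ ≤ θ := by
        rw [Finset.sum_const, Finset.card_univ, nsmul_eq_mul]
        exact ENNReal.mul_div_le

variable {A : Type*}

/-- Closeness of two points over the full shift at scale `N`: equal symbols in `[-N, N]` and heights
at distance at most `1 / (N + 1)`. -/
def CloseAtScale (N : ℕ) (z w : (ℤ → A) × ℝ) : Prop :=
  Set.EqOn z.1 w.1 (Set.Icc (-N) N) ∧ |z.2 - w.2| ≤ 1 / ((N : ℝ) + 1)

lemma CloseAtScale.anti {N N' : ℕ} (hN : N ≤ N') {z w : (ℤ → A) × ℝ}
    (h : CloseAtScale N' z w) : CloseAtScale N z w :=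
  ⟨h.1.mono (Set.Icc_subset_Icc (by gcongr) (by gcongr)), h.2.trans (by gcongr)⟩

variable [TopologicalSpace A]

lemma tendsto_of_closeAtScale {φ : ℕ → ℕ} (hφ : Tendsto φ atTop atTop)
    {z w : ℕ → (ℤ → A) × ℝ} (h : ∀ N, CloseAtScale (φ N) (z N) (w N)) {y : (ℤ → A) × ℝ}
    (hz : Tendsto z atTop (𝓝 y)) : Tendsto w atTop (𝓝 y) := by
  rw [Prod.tendsto_iff, tendsto_pi_nhds] at hz ⊢
  refine ⟨fun j => (hz.1 j).congr' ?_, ?_⟩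
  · filter_upwards [hφ.eventually_ge_atTop j.natAbs] with N hN
    exact (h N).1 ⟨by omega, by omega⟩
  · have hdiff : Tendsto (fun N => (z N).2 - (w N).2) atTop (𝓝 0) :=
      squeeze_zero_norm (fun N => (h N).2) (tendsto_one_div_add_atTop_nhds_zero_nat.comp hφ)
    simpa using hz.2.sub hdiff

variable [DiscreteTopology A]

lemma exists_not_closeAtScale_of_isCompact {K L : Set ((ℤ → A) × ℝ)} (hK : IsCompact K)
    (hL : IsClosed L) (hKL : Disjoint K L) :
    ∃ N, ∀ z ∈ K, ∀ w ∈ L, ¬ CloseAtScale N z w := by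
  by_contra! hcon
  choose z hz w hw hzw using hcon
  obtain ⟨y, hy, φ, hφ, hlim⟩ := hK.tendsto_subseq hz
  exact Set.disjoint_left.1 hKL hy (hL.mem_of_tendsto
    (tendsto_of_closeAtScale hφ.tendsto_atTop (fun N => hzw (φ N)) hlim)
    (Eventually.of_forall fun N => hw _))

lemma exists_forall_closeAtScale_imp_eq {κ : Type*} [Finite κ] {K : κ → Set ((ℤ → A) × ℝ)}
    (hK : ∀ a, IsCompact (K a)) (hd : Pairwise (Function.onFun Disjoint K)) :
    ∃ N, ∀ a b, ∀ z ∈ K a, ∀ w ∈ K b, CloseAtScale N z w → a = b := by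
  have hsep (q : κ × κ) : ∀ᶠ N in atTop, ∀ z ∈ K q.1, ∀ w ∈ K q.2, CloseAtScale N z w →
      q.1 = q.2 := by
    by_cases hab : q.1 = q.2
    · exact Eventually.of_forall fun _ _ _ _ _ _ => hab
    · obtain ⟨N, hN⟩ := exists_not_closeAtScale_of_isCompact (hK q.1) (hK q.2).isClosed (hd hab)
      filter_upwards [eventually_ge_atTop N] with N' hN' z hz w hw h
      exact absurd (h.anti hN') (hN z hz w hw)
  obtain ⟨N, hN⟩ := (eventually_all.2 hsep).exists
  exact ⟨N, fun a b => hN (a, b)⟩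

lemma exists_measurableSet_forall_closeAtScale_imp_eq [Finite A] [MeasurableSpace A]
    [MeasurableSingletonClass A] {κ : Type*} [Finite κ] [MeasurableSpace κ]
    [MeasurableSingletonClass κ] {μ : Measure ((ℤ → A) × ℝ)} [IsFiniteMeasureOnCompacts μ]
    {Q : (ℤ → A) × ℝ → κ} (hQ : Measurable Q) {S : Set ((ℤ → A) × ℝ)} (hS : MeasurableSet S)
    (hμS : μ S ≠ ∞) {θ : ℝ≥0∞} (hθ : θ ≠ 0) :
    ∃ (B : Set ((ℤ → A) × ℝ)) (N : ℕ), MeasurableSet B ∧ μ B ≤ θ ∧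
      ∀ z ∈ S \ B, ∀ w ∈ S \ B, CloseAtScale N z w → Q z = Q w := by
  obtain ⟨K, hK, hKQ, hμK⟩ := exists_isCompact_subset_preimage (μ := μ) hQ hS hμS hθ
  obtain ⟨N, hN⟩ := exists_forall_closeAtScale_imp_eq hK fun a b hab =>
    ((Set.disjoint_singleton.2 hab).preimage Q).mono (hKQ a) (hKQ b)
  refine ⟨S \ ⋃ a, K a, N, hS.diff (.iUnion fun a => (hK a).measurableSet), hμK, ?_⟩
  simp only [Set.sdiff_sdiff_right_self, Set.mem_inter_iff, Set.mem_iUnion]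
  rintro z ⟨-, a, ha⟩ w ⟨-, b, hb⟩ hzw
  rw [hKQ a ha, hKQ b hb, hN a b z ha w hb hzw]

end CompactApproximation

section Window

variable {A : Type*} [MeasurableSpace A] {f : (ℤ → A) → ℝ} {a₀ : A}

/-- The value of `f` at `u` depends only on the symbols of `u` between any two occurrences of `a₀`
on either side of the origin. -/
def DeterminedBetween (a₀ : A) (f : (ℤ → A) → ℝ) : Prop :=
  ∀ u v : ℤ → A, ∀ a ≤ 0, ∀ b ≥ 0, u a = a₀ → u b = a₀ → Set.EqOn u v (Set.Icc a b) → f u = f v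

/-- The sequences in which `a₀` does not occur at the positions `0, …, R`. -/
def avoiding (a₀ : A) (R : ℕ) : Set (ℤ → A) := {u | ∀ j : ℕ, j ≤ R → u j ≠ a₀}

lemma measurableSet_avoiding [MeasurableSingletonClass A] (a₀ : A) (R : ℕ) :
    MeasurableSet (avoiding a₀ R) := by
  simp only [avoiding, Set.ofPred_forall]
  exact .iInter fun j => .iInter fun _ =>
    (show Measurable fun u : ℤ → A => u j from measurable_pi_apply _)
      (measurableSet_singleton a₀).compl

lemma itinerary_shift_symm_iterate_eq_iff {u v : ℤ → A} {M R : ℕ} :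
    itinerary (shift A) (· 0) (M + 2 * R + 1) ((shift A).symm^[R] u)
        = itinerary (shift A) (· 0) (M + 2 * R + 1) ((shift A).symm^[R] v)
      ↔ Set.EqOn u v (Set.Icc (-R) (M + R)) := by
  simp only [funext_iff, itinerary, shift_iterate_apply, shift_symm_iterate_apply, zero_add]
  refine ⟨fun h j hj => ?_, fun h i => h ⟨by omega, by omega⟩⟩
  obtain ⟨i, hi⟩ := Int.eq_ofNat_of_zero_le (show 0 ≤ j + R by linarith [hj.1])
  have := h ⟨i, by have := hj.2; omega⟩
  rwa [← hi, add_sub_cancel_right] at this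

lemma DeterminedBetween.birkhoffSum_eq (hf : DeterminedBetween a₀ f) {u v : ℤ → A} {M R j : ℕ}
    (hj : j ≤ M) (huv : Set.EqOn u v (Set.Icc (-R) (M + R)))
    (hl : (shift A).symm^[R] u ∉ avoiding a₀ R) (hr : (shift A)^[M] u ∉ avoiding a₀ R) :
    birkhoffSum (shift A) f j u = birkhoffSum (shift A) f j v := by
  simp only [avoiding, Set.mem_ofPred_eq, shift_iterate_apply, shift_symm_iterate_apply,
    not_forall, not_not, exists_prop] at hl hr
  obtain ⟨a, ha, hua⟩ := hl
  obtain ⟨b, hb, hub⟩ := hr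
  refine Finset.sum_congr rfl fun i hi => ?_
  have hi := Finset.mem_range.1 hi
  refine hf _ _ (a - R - i) (by omega) (b + M - i) (by omega) ?_ ?_ fun n hn => ?_
  · rwa [shift_iterate_apply, sub_add_cancel]
  · rwa [shift_iterate_apply, sub_add_cancel]
  · rw [shift_iterate_apply, shift_iterate_apply]
    exact huv ⟨by linarith [hn.1], by linarith [hn.2]⟩

lemma crossings_le_of_add_le_birkhoffSum {X : Type*} {T : X → X} {f : X → ℝ} (hf0 : 0 ≤ f) {C : ℝ}
    (hfC : ∀ x, f x ≤ C) {z : X × ℝ} (hz : z ∈ suspDom f)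
    (hrec : Tendsto (birkhoffSum T f · z.1) atTop atTop) {M n i : ℕ}
    (hM : n + C ≤ birkhoffSum T f M z.1) (hi : i < n) : crossings T f z i ≤ M := by
  by_contra! hlt
  have hS := (le_crossings_iff hf0 hz.1 hrec i _).1 hlt
  have hmono := monotone_birkhoffSum (T := T) hf0 z.1 M.le_succ
  have hi' : (i : ℝ) < n := by exact_mod_cast hi
  linarith [hz.2, hfC z.1]

lemma closeAtScale_suspStep_iterate_vert {z w : (ℤ → A) × ℝ} {M N R i j : ℕ} (hj : j ≤ M)
    (hNR : N ≤ R) (hzw : Set.EqOn z.1 w.1 (Set.Icc (-R) (M + R)))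
    (hd : |z.2 - w.2| ≤ 1 / ((N : ℝ) + 1))
    (hS : birkhoffSum (shift A) f j z.1 = birkhoffSum (shift A) f j w.1) :
    CloseAtScale N ((suspStep (shift A) f)^[j] (vert i z))
      ((suspStep (shift A) f)^[j] (vert i w)) := by
  simp only [CloseAtScale, suspStep_iterate, vert, hS, sub_sub_sub_cancel_right,
    add_sub_add_right_eq_sub]
  refine ⟨fun r hr => ?_, hd⟩
  rw [shift_iterate_apply, shift_iterate_apply]
  exact hzw ⟨by linarith [hr.1], by linarith [hr.2]⟩

/-- The base points whose symbols in the window `[-R, M + R]` determine the returns to the section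
during `n` units of time: the first `M` returns take longer than that, and `a₀` occurs in both end
pieces of the window. -/
def windowed (a₀ : A) (f : (ℤ → A) → ℝ) (C : ℝ) (M R n : ℕ) : Set (ℤ → A) :=
  {u | Tendsto (birkhoffSum (shift A) f · u) atTop atTop ∧ n + C ≤ birkhoffSum (shift A) f M u ∧
    (shift A).symm^[R] u ∉ avoiding a₀ R ∧ (shift A)^[M] u ∉ avoiding a₀ R}

lemma DeterminedBetween.observable_eq (hf : DeterminedBetween a₀ f) (hf0 : 0 ≤ f) {C : ℝ}
    (hfC : ∀ u, f u ≤ C) {κ : Type*} {P : SuspSpace (shift A) f → κ} {B : Set ((ℤ → A) × ℝ)} {N : ℕ}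
    (hB : ∀ z ∈ (Set.univ ×ˢ Set.Icc (-1) (C + 1)) \ B,
      ∀ w ∈ (Set.univ ×ˢ Set.Icc (-1) (C + 1)) \ B,
        CloseAtScale N z w → P (Quot.mk _ z) = P (Quot.mk _ w))
    {M R n i : ℕ} (hNR : N ≤ R) (hi : i < n)
    {z w : (ℤ → A) × ℝ} (hz : z ∈ suspDom f) (hz1 : z.1 ∈ windowed a₀ f C M R n)
    (hzw : Set.EqOn z.1 w.1 (Set.Icc (-R) (M + R))) (hd : |z.2 - w.2| ≤ 1 / ((N : ℝ) + 1))
    (hzB : z ∉ visitSet (shift A) f B i) (hwB : w ∉ visitSet (shift A) f B i) :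
    P (Quot.mk _ (vert i z)) = P (Quot.mk _ (vert i w)) := by
  obtain ⟨hrec, hM, hl, hr⟩ := hz1
  set j := crossings (shift A) f z i
  have hj : j ≤ M := crossings_le_of_add_le_birkhoffSum hf0 hfC hz hrec hM hi
  have hclose := closeAtScale_suspStep_iterate_vert (i := i) hj hNR hzw hd
    (hf.birkhoffSum_eq hj hzw hl hr)
  have hdom := suspStep_crossings_mem_suspDom (T := shift A) hf0 hz.1 hrec i
  have hN : 1 / ((N : ℝ) + 1) ≤ 1 := (div_le_one (by positivity)).2 (by simp)
  have hd1 := abs_le.1 (hclose.2.trans hN)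
  have hzC := hdom.2.trans_le (hfC _)
  have h := hB _ ⟨⟨trivial, by linarith [hdom.1], by linarith⟩, fun h => hzB ⟨j, h⟩⟩ _
    ⟨⟨trivial, by linarith [hdom.1], by linarith⟩, fun h => hwB ⟨j, h⟩⟩ hclose
  rwa [mk_suspStep_iterate, mk_suspStep_iterate] at h

end Window

section Counting

lemma card_image_le_of_fiberwise_hammingDist_le {Ω κ α : Type*} [DecidableEq α]
    {n : ℕ} {r b : ℝ}
    (hball : ∀ (v : Fin n → α) (B : Finset (Fin n → α)),
      (∀ w ∈ B, (hammingDist w v : ℝ) ≤ r) → (B.card : ℝ) ≤ b) (hb : 0 ≤ b)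
    {F : Ω → Fin n → α} {G : Set Ω} {key : Ω → κ} {S : Finset κ} (hS : ∀ z ∈ G, key z ∈ S)
    (hF : ∀ z ∈ G, ∀ w ∈ G, key z = key w → (hammingDist (F z) (F w) : ℝ) ≤ r)
    {J : Finset (Fin n → α)} (hJ : (J : Set (Fin n → α)) ⊆ F '' G) :
    (J.card : ℝ) ≤ S.card * b := by
  classical
  rcases J.eq_empty_or_nonempty with rfl | ⟨v₀, hv₀⟩
  · simpa using mul_nonneg S.card.cast_nonneg hb
  have : Nonempty Ω := ⟨(hJ hv₀).choose⟩
  choose! y hyG hy using fun v (hv : v ∈ J) => hJ hv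
  have hfib : ∀ s ∈ S, ({v ∈ J | key (y v) = s}.card : ℝ) ≤ b := by
    intro s _
    rcases Finset.eq_empty_or_nonempty {v ∈ J | key (y v) = s} with h | ⟨v, hv⟩
    · simpa [h] using hb
    · obtain ⟨hvJ, hvs⟩ := Finset.mem_filter.1 hv
      refine hball v _ fun w hw => ?_
      obtain ⟨hwJ, hws⟩ := Finset.mem_filter.1 hw
      rw [← hy v hvJ, ← hy w hwJ]
      exact hF _ (hyG w hwJ) _ (hyG v hvJ) (hws.trans hvs.symm)
  rw [Finset.card_eq_sum_card_fiberwise fun v hv => hS _ (hyG v hv), Nat.cast_sum, ← nsmul_eq_mul]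
  exact Finset.sum_le_card_nsmul _ _ _ hfib

lemma hammingDist_le_card_add_card {α : Type*} [DecidableEq α] {n : ℕ} {x y : Fin n → α}
    {p q : ℕ → Prop} [DecidablePred p] [DecidablePred q]
    (h : ∀ i : Fin n, ¬ p i → ¬ q i → x i = y i) :
    hammingDist x y ≤ {i ∈ Finset.range n | p i}.card + {i ∈ Finset.range n | q i}.card := by
  refine le_trans ?_ (Finset.card_union_le _ _)
  refine Finset.card_le_card_of_injOn Fin.val (fun i hi => ?_) Fin.val_injective.injOn
  have hne := (Finset.mem_filter.1 (Finset.mem_coe.1 hi)).2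
  rw [← Finset.filter_or, Finset.coe_filter, Set.mem_ofPred_eq, Finset.mem_range]
  exact ⟨i.2, by_contra fun hcon => hne (h i (fun hp => hcon (.inl hp)) fun hq => hcon (.inr hq))⟩

lemma abs_sub_le_of_natFloor_mul_eq {x y : ℝ} (hx : 0 ≤ x) (hy : 0 ≤ y) {N : ℕ}
    (h : ⌊x * (N + 1)⌋₊ = ⌊y * (N + 1)⌋₊) : |x - y| ≤ 1 / ((N : ℝ) + 1) := by
  have hN : (0 : ℝ) < N + 1 := by positivity
  rw [le_div_iff₀ hN, ← abs_of_pos hN, ← abs_mul, sub_mul]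
  have hfloor : ⌊x * (N + 1)⌋ = ⌊y * (N + 1)⌋ := by
    rw [← Int.natCast_floor_eq_floor (by positivity), h, Int.natCast_floor_eq_floor (by positivity)]
  simpa [abs_of_pos hN] using (Int.abs_sub_lt_one_of_floor_eq_floor hfloor).le

end Counting

section Tracking

variable {A : Type*} [MeasurableSpace A] {m : Measure (ℤ → A)} {f : (ℤ → A) → ℝ} {a₀ : A}

/-- The base points whose word in the window `[-R, M + R]` has probability at least `t`. -/
def likely (m : Measure (ℤ → A)) (M R : ℕ) (t : ℝ) : Set (ℤ → A) :=
  {u | t ≤ (m.map (itinerary (shift A) (· 0) (M + 2 * R + 1))).real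
    {itinerary (shift A) (· 0) (M + 2 * R + 1) ((shift A).symm^[R] u)}}

open Classical in
/-- The points of the suspension domain whose orbit meets `B` at fewer than `r` of the times
`0, …, n - 1`. -/
def rarelyVisiting (f : (ℤ → A) → ℝ) (B : Set ((ℤ → A) × ℝ)) (n : ℕ) (r : ℝ) :
    Set ((ℤ → A) × ℝ) :=
  {z ∈ suspDom f | ({i ∈ Finset.range n | z ∈ visitSet (shift A) f B (i : ℕ)}.card : ℝ) < r}

lemma DeterminedBetween.card_le_of_subset_image [Finite A] [MeasurableSingletonClass A]
    [IsProbabilityMeasure m] (hf : DeterminedBetween a₀ f) (hf0 : 0 ≤ f) {C : ℝ}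
    (hfC : ∀ u, f u ≤ C) {κ : Type*} [Finite κ] [DecidableEq κ] {P : SuspSpace (shift A) f → κ}
    {B : Set ((ℤ → A) × ℝ)} {N : ℕ}
    (hB : ∀ z ∈ (Set.univ ×ˢ Set.Icc (-1) (C + 1)) \ B,
      ∀ w ∈ (Set.univ ×ˢ Set.Icc (-1) (C + 1)) \ B,
        CloseAtScale N z w → P (Quot.mk _ z) = P (Quot.mk _ w))
    {M R n : ℕ} (hNR : N ≤ R)
    {t r b : ℝ} (ht : 0 < t) (hb : 0 ≤ b)
    (hball : ∀ (v : Fin n → κ) (B : Finset (Fin n → κ)),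
      (∀ w ∈ B, (hammingDist w v : ℝ) ≤ 2 * r) → (B.card : ℝ) ≤ b) {J : Finset (Fin n → κ)}
    (hJ : (J : Set (Fin n → κ)) ⊆ (fun z => itinerary (suspFlow (shift A) f 1) P n (Quot.mk _ z)) ''
      (rarelyVisiting f B n r ∩ Prod.fst ⁻¹' (windowed a₀ f C M R n ∩ likely m M R t))) :
    (J.card : ℝ) ≤ t⁻¹ * (⌊C * (N + 1)⌋₊ + 1) * b := by
  have := Fintype.ofFinite A
  classical
  set word : (ℤ → A) → Fin (M + 2 * R + 1) → A :=
    fun u => itinerary (shift A) (· 0) _ ((shift A).symm^[R] u)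
  set law := m.map (itinerary (shift A) (· 0) (M + 2 * R + 1))
  have : IsProbabilityMeasure law := Measure.isProbabilityMeasure_map
    (measurable_itinerary (shift A).measurable (measurable_pi_apply 0) _).aemeasurable
  have hS : ∀ z ∈ rarelyVisiting f B n r ∩ Prod.fst ⁻¹' (windowed a₀ f C M R n ∩ likely m M R t),
      (word z.1, ⌊z.2 * (N + 1)⌋₊) ∈
        ({w | t ≤ law.real {w}} : Finset _) ×ˢ Finset.range (⌊C * (N + 1)⌋₊ + 1) := by
    rintro z ⟨⟨hz, -⟩, -, hzt⟩
    refine Finset.mem_product.2 ⟨Finset.mem_filter.2 ⟨Finset.mem_univ _, hzt⟩,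
      Finset.mem_range_succ_iff.2 (Nat.floor_le_floor ?_)⟩
    have := hz.2.le.trans (hfC _)
    gcongr
  refine (card_image_le_of_fiberwise_hammingDist_le hball hb hS ?_ hJ).trans ?_
  · rintro z ⟨⟨hz, hzr⟩, hz1, -⟩ w ⟨⟨hw, hwr⟩, -, -⟩ hzw
    have hdist := hammingDist_le_card_add_card (n := n)
      (x := itinerary (suspFlow (shift A) f 1) P n (Quot.mk _ z))
      (y := itinerary (suspFlow (shift A) f 1) P n (Quot.mk _ w))
      (p := fun i => z ∈ visitSet (shift A) f B i) (q := fun i => w ∈ visitSet (shift A) f B i)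
      fun i hiz hiw => by
        rw [itinerary_suspFlow_mk, itinerary_suspFlow_mk]
        exact hf.observable_eq hf0 hfC hB hNR i.2 hz hz1
          (itinerary_shift_symm_iterate_eq_iff.1 (congrArg Prod.fst hzw))
          (abs_sub_le_of_natFloor_mul_eq hz.1 hw.1 (congrArg Prod.snd hzw)) hiz hiw
    have hdist' : (hammingDist (itinerary (suspFlow (shift A) f 1) P n (Quot.mk _ z))
        (itinerary (suspFlow (shift A) f 1) P n (Quot.mk _ w)) : ℝ) ≤ _ := Nat.cast_le.2 hdist
    push_cast at hdist'
    linarith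
  · rw [Finset.card_product, Finset.card_range, Nat.cast_mul, Nat.cast_succ]
    gcongr
    rw [← one_div, le_div_iff₀ ht]
    exact card_filter_le_measureReal_mul_le law t

end Tracking

section UpperBound

variable {A : Type*} [MeasurableSpace A] {m : Measure (ℤ → A)} {f : (ℤ → A) → ℝ} {a₀ : A}

lemma measureReal_domMeasure_compl_rarelyVisiting_le [IsProbabilityMeasure m]
    (hm : MeasurePreserving (shift A) m m) (hf0 : 0 ≤ f) (hf : Measurable f)
    (hfc : 0 < ∫ u, f u ∂m) {B : Set ((ℤ → A) × ℝ)} (hB : MeasurableSet B) {ε η : ℝ} (hε : 0 < ε)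
    (hη : 0 < η) (hBm : m.prod volume B ≤ ENNReal.ofReal (ε * η * ∫ u, f u ∂m)) {n : ℕ}
    (hn : 0 < n) : (domMeasure f m).real (rarelyVisiting f B n (η * n))ᶜ ≤ ε := by
  classical
  have := isProbabilityMeasure_domMeasure hf0 hf hfc
  have hvisit (t : ℝ) : (domMeasure f m).real (visitSet (shift A) f B t) ≤ ε * η := by
    refine ENNReal.toReal_le_of_le_ofReal (by positivity)
      ((domMeasure_visitSet_le hm hf0 hf hB t).trans ?_)
    calc _ ≤ (ENNReal.ofReal (∫ u, f u ∂m))⁻¹ * ENNReal.ofReal (ε * η * ∫ u, f u ∂m) := by gcongr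
      _ = ENNReal.ofReal (ε * η) := by
        rw [← ENNReal.ofReal_inv_of_pos hfc, ← ENNReal.ofReal_mul (by positivity),
          inv_mul_eq_div, mul_div_cancel_right₀ _ hfc.ne']
  have hmarkov := (mul_measureReal_card_filter_mem_ge_le (μ := domMeasure f m)
    (s := Finset.range n) (E := fun i => visitSet (shift A) f B i)
    (fun i _ => measurableSet_visitSet (shift A).measurable hf hB i) (η * n)).trans
    (Finset.sum_le_card_nsmul _ _ _ fun i _ => hvisit i)
  rw [Finset.card_range, nsmul_eq_mul, show n * (ε * η) = η * n * ε by ring] at hmarkov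
  refine (measureReal_mono_ae ?_).trans (le_of_mul_le_mul_left hmarkov (by positivity))
  filter_upwards [ae_mem_suspDom hf] with z hz hzc
  exact not_lt.1 fun h => hzc ⟨hz, h⟩

lemma tendsto_measureReal_compl_windowed [IsFiniteMeasure m]
    [MeasurableSingletonClass A] (hm : MeasurePreserving (shift A) m m) (hf0 : 0 ≤ f)
    (hfc : 0 < ∫ u, f u ∂m) (hlln : LawOfLargeNumbers (shift A) m f)
    (hrare : Tendsto (fun R => m.real (avoiding a₀ R)) atTop (𝓝 0)) (C : ℝ) {a ε : ℝ} (hε : 0 < ε)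
    (ha : 1 < a * ∫ u, f u ∂m) :
    Tendsto (fun n : ℕ => m.real (windowed a₀ f C ⌊a * n⌋₊ ⌊ε * n⌋₊ n)ᶜ) atTop (𝓝 0) := by
  obtain ⟨b, hb1, hb⟩ := exists_between ha
  have ha0 : 0 < a := pos_of_mul_pos_left (one_pos.trans ha) hfc.le
  have hlate := hlln.tendsto_measureReal_birkhoffSum_le ha0 (tendsto_natFloor_mul_atTop ha0)
    (tendsto_natFloor_mul_div ha0.le) hb
  have hrareR := hrare.comp (tendsto_natFloor_mul_atTop hε)
  have hlim := hlate.add (hrareR.add hrareR)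
  simp only [add_zero] at hlim
  refine tendsto_of_tendsto_of_tendsto_of_le_of_le' tendsto_const_nhds hlim
    (Eventually.of_forall fun n => measureReal_nonneg) ?_
  have hgap : Tendsto (fun n : ℕ => (b - 1) * (n : ℝ)) atTop atTop :=
    tendsto_natCast_atTop_atTop.const_mul_atTop (sub_pos.2 hb1)
  filter_upwards [hgap.eventually_ge_atTop C] with n hn
  have hpre {S : (ℤ → A) → ℤ → A} (hS : MeasurePreserving S m m) :=
    hS.measureReal_preimage (measurableSet_avoiding a₀ ⌊ε * n⌋₊).nullMeasurableSet
  calc _ ≤ m.real ({u | birkhoffSum (shift A) f ⌊a * n⌋₊ u ≤ b * n} ∪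
          ((shift A).symm^[⌊ε * n⌋₊] ⁻¹' avoiding a₀ ⌊ε * n⌋₊ ∪
            (shift A)^[⌊a * n⌋₊] ⁻¹' avoiding a₀ ⌊ε * n⌋₊)) := by
        refine measureReal_mono_ae ?_
        filter_upwards [hlln.ae_tendsto_birkhoffSum hf0 hfc] with u hu huc
        by_contra hcon
        obtain ⟨hS, hlr⟩ := not_or.1 hcon
        refine huc ⟨hu, ?_, not_or.1 hlr⟩
        linarith [not_le.1 (show ¬ birkhoffSum (shift A) f ⌊a * n⌋₊ u ≤ b * n from hS)]
    _ ≤ _ := (measureReal_union_le _ _).trans (add_le_add_right (measureReal_union_le _ _) _)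
    _ = _ := by
        rw [hpre (hm.symm.iterate _), hpre (hm.iterate _)]
        rfl

lemma EquipartitionProperty.tendsto_measureReal_compl_likely [IsFiniteMeasure m] [Countable A]
    [MeasurableSingletonClass A] (hm : MeasurePreserving (shift A) m m) {h h' : ℝ}
    (haep : EquipartitionProperty (shift A) m (· 0) h) (hh : h < h') {M R : ℕ → ℕ}
    (hM : Tendsto M atTop atTop) :
    Tendsto (fun n => m.real
      (likely m (M n) (R n) (Real.exp (-((M n + 2 * R n + 1 : ℕ) * h'))))ᶜ) atTop (𝓝 0) := by
  have hL : Tendsto (fun n => M n + 2 * R n + 1) atTop atTop :=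
    tendsto_atTop_mono (fun n => by omega) hM
  refine ((haep.tendsto_measureReal_lt_exp (shift A).measurable (measurable_pi_apply 0) hh).comp
    hL).congr fun n => ?_
  rw [Function.comp_apply, ← (hm.symm.iterate (R n)).measureReal_preimage ?_]
  · simp only [likely, Set.preimage, Set.mem_ofPred_eq, Set.compl_ofPred, not_le]
  · exact (measurable_itinerary (shift A).measurable (measurable_pi_apply 0) _
      (Set.to_countable {w | (m.map (itinerary (shift A) (· 0) _)).real {w} < _}).measurableSet
        ).nullMeasurableSet

variable [IsProbabilityMeasure m] [MeasurableSingletonClass A]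

lemma eventually_measureReal_compl_rarelyVisiting_inter_le [Countable A]
    (hm : MeasurePreserving (shift A) m m) (hf0 : 0 ≤ f) (hf : Measurable f)
    (hfc : 0 < ∫ u, f u ∂m) {C : ℝ} (hfC : ∀ u, f u ≤ C) (hlln : LawOfLargeNumbers (shift A) m f)
    (hrare : Tendsto (fun R => m.real (avoiding a₀ R)) atTop (𝓝 0)) {h h' : ℝ}
    (haep : EquipartitionProperty (shift A) m (· 0) h) (hh : h < h') {a ε η : ℝ} (hε : 0 < ε)
    (hη : 0 < η) (ha : 1 < a * ∫ u, f u ∂m) {B : Set ((ℤ → A) × ℝ)} (hB : MeasurableSet B)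
    (hBm : m.prod volume B ≤ ENNReal.ofReal (ε * η * ∫ u, f u ∂m)) :
    ∀ᶠ n : ℕ in atTop, (domMeasure f m).real (rarelyVisiting f B n (η * n) ∩
      Prod.fst ⁻¹' (windowed a₀ f C ⌊a * n⌋₊ ⌊ε * n⌋₊ n ∩ likely m ⌊a * n⌋₊ ⌊ε * n⌋₊
        (Real.exp (-((⌊a * n⌋₊ + 2 * ⌊ε * n⌋₊ + 1 : ℕ) * h')))))ᶜ ≤ 2 * ε := by
  have := isProbabilityMeasure_domMeasure hf0 hf hfc
  have hC := pos_of_integral_pos_of_forall_le hfc hfC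
  have ha0 : 0 < a := pos_of_mul_pos_left (one_pos.trans ha) hfc.le
  have hlim := ((tendsto_measureReal_compl_windowed hm hf0 hfc hlln hrare C hε ha).add
    (haep.tendsto_measureReal_compl_likely hm hh (tendsto_natFloor_mul_atTop ha0)
      (R := fun n => ⌊ε * n⌋₊))).const_mul (C / ∫ u, f u ∂m)
  simp only [add_zero, mul_zero] at hlim
  filter_upwards [hlim.eventually_le_const hε, eventually_gt_atTop 0] with n hn hn0
  rw [Set.compl_inter, ← Set.preimage_compl, Set.compl_inter, two_mul ε]
  refine (measureReal_union_le _ _).trans (add_le_add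
    (measureReal_domMeasure_compl_rarelyVisiting_le hm hf0 hf hfc hB hε hη hBm hn0)
    ((measureReal_domMeasure_fst_preimage_le hf hfc hfC _).trans (le_trans ?_ hn)))
  gcongr
  exact measureReal_union_le _ _

lemma exists_measurableSet_forall_closeAtScale_observable_eq [Finite A]
    {k : ℕ} {P : SuspSpace (shift A) f → Fin k} (hP : Measurable P) (a b : ℝ) {θ : ℝ} (hθ : 0 < θ) :
    ∃ (B : Set ((ℤ → A) × ℝ)) (N : ℕ), MeasurableSet B ∧ m.prod volume B ≤ ENNReal.ofReal θ ∧
      ∀ z ∈ (Set.univ ×ˢ Set.Icc a b) \ B, ∀ w ∈ (Set.univ ×ˢ Set.Icc a b) \ B,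
        CloseAtScale N z w → P (Quot.mk _ z) = P (Quot.mk _ w) := by
  let _ : TopologicalSpace A := ⊥
  have : DiscreteTopology A := ⟨rfl⟩
  refine exists_measurableSet_forall_closeAtScale_imp_eq (hP.comp measurable_quot_mk)
    (MeasurableSet.univ.prod measurableSet_Icc) ?_ (ENNReal.ofReal_pos.2 hθ).ne'
  rw [Measure.prod_prod, measure_univ, one_mul]
  exact measure_Icc_lt_top.ne

open Classical in
lemma shannonEnt_map_le_of_card_image_le {Ω α : Type*} [MeasurableSpace Ω] {ν : Measure Ω}
    [IsProbabilityMeasure ν] [Fintype α] [MeasurableSpace α] [MeasurableSingletonClass α]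
    {F : Ω → α} (hF : Measurable F) {G : Set Ω} {δ c : ℝ} (hδ : δ < 1) (hG : ν.real Gᶜ ≤ δ)
    (hc : ∀ J : Finset α, (J : Set α) ⊆ F '' G → (J.card : ℝ) ≤ c) :
    shannonEnt (ν.map F) ≤ Real.log c + δ * Real.log (Fintype.card α) + 1 := by
  have := Measure.isProbabilityMeasure_map (μ := ν) hF.aemeasurable
  have hJG : (({v | v ∈ F '' G} : Finset α) : Set α) = F '' G := by
    rw [Finset.coe_filter_univ]
    rfl
  have hJ := hc _ hJG.subset
  set J : Finset α := {v | v ∈ F '' G}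
  have hJc : (ν.map F).real (J : Set α)ᶜ ≤ δ := by
    rw [map_measureReal_apply hF J.measurableSet.compl]
    refine (measureReal_mono (show F ⁻¹' (J : Set α)ᶜ ⊆ Gᶜ from ?_)).trans hG
    exact fun z hz hzG => hz (hJG ▸ Set.mem_image_of_mem F hzG)
  have hJ0 : (0 : ℝ) < J.card := by
    rw [Nat.cast_pos, Finset.card_pos]
    by_contra! h0
    rw [h0, Finset.coe_empty, Set.compl_empty, probReal_univ] at hJc
    exact hδ.not_ge hJc
  refine (shannonEnt_le_log_card_add _ J).trans ?_
  gcongr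

lemma DeterminedBetween.exists_eventually_shannonEnt_le [Finite A]
    (hf : DeterminedBetween a₀ f) (hm : MeasurePreserving (shift A) m m) (hf0 : 0 ≤ f)
    (hfm : Measurable f) (hfc : 0 < ∫ u, f u ∂m) {C : ℝ} (hfC : ∀ u, f u ≤ C)
    (hlln : LawOfLargeNumbers (shift A) m f)
    (hrare : Tendsto (fun R => m.real (avoiding a₀ R)) atTop (𝓝 0)) {h h' : ℝ}
    (haep : EquipartitionProperty (shift A) m (· 0) h) (hh : h < h') {k : ℕ}
    {P : SuspSpace (shift A) f → Fin k} (hP : Measurable P) {a ε : ℝ} (hε : 0 < ε)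
    (hε1 : 2 * ε < 1) (ha : 1 < a * ∫ u, f u ∂m) :
    ∃ D : ℝ, ∀ᶠ n : ℕ in atTop,
      shannonEnt ((suspMeasure (shift A) f m).map (itinerary (suspFlow (shift A) f 1) P n))
        ≤ (⌊a * n⌋₊ + 2 * ⌊ε * n⌋₊ + 1 : ℕ) * h' + D + ε * n + 2 * ε * (n * Real.log k) + 1 := by
  have := isProbabilityMeasure_domMeasure hf0 hfm hfc
  obtain ⟨η, hη, hball⟩ := exists_card_le_exp_of_hammingDist_le (Fin k) hε
  obtain ⟨B, N, hB, hBm, hsep⟩ := exists_measurableSet_forall_closeAtScale_observable_eq (m := m)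
    hP (-1) (C + 1) (show 0 < ε * (η / 2) * ∫ u, f u ∂m by positivity)
  refine ⟨Real.log (⌊C * (N + 1)⌋₊ + 1), ?_⟩
  filter_upwards [eventually_measureReal_compl_rarelyVisiting_inter_le hm hf0 hfm hfc hfC hlln hrare
    haep hh hε (half_pos hη) ha hB hBm, (tendsto_natFloor_mul_atTop hε).eventually_ge_atTop N]
    with n hG hNR
  have hent := shannonEnt_map_le_of_card_image_le
    ((measurable_itinerary (measurable_suspFlow (shift A) f 1) hP n).comp measurable_quot_mk) hε1 hG
    fun J hJ => hf.card_le_of_subset_image hf0 hfC hsep hNR (r := η / 2 * n) (Real.exp_pos _)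
      (Real.exp_pos _).le
      (fun v S hS => hball n v S fun w hw => by linarith [hS w hw]) hJ
  rw [map_itinerary_suspMeasure m hP]
  rw [← Real.exp_neg, neg_neg, Real.log_mul (by positivity) (by positivity),
    Real.log_mul (by positivity) (by positivity), Real.log_exp, Real.log_exp, Fintype.card_fun,
    Fintype.card_fin, Fintype.card_fin, Nat.cast_pow, Real.log_pow] at hent
  exact hent

theorem DeterminedBetween.kolSinai_suspFlow_le [Finite A]
    (hf : DeterminedBetween a₀ f) (hm : MeasurePreserving (shift A) m m) (hf0 : 0 ≤ f)
    (hfm : Measurable f) (hfc : 0 < ∫ u, f u ∂m) {C : ℝ} (hfC : ∀ u, f u ≤ C)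
    (hlln : LawOfLargeNumbers (shift A) m f)
    (hrare : Tendsto (fun R => m.real (avoiding a₀ R)) atTop (𝓝 0)) {h : ℝ}
    (haep : EquipartitionProperty (shift A) m (· 0) h) :
    kolSinai (suspFlow (shift A) f 1) (suspMeasure (shift A) f m)
      ≤ ENNReal.ofReal (h / ∫ u, f u ∂m) := by
  refine iSup_le fun k => iSup_le fun P => iSup_le fun hP => ?_
  set c := ∫ u, f u ∂m with hc
  have hcont : Tendsto (fun ε : ℝ => ENNReal.ofReal
      (((1 + ε) / c + 2 * ε) * (h + ε) + ε + 2 * ε * Real.log k)) (𝓝[>] 0)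
      (𝓝 (ENNReal.ofReal (((1 + 0) / c + 2 * 0) * (h + 0) + 0 + 2 * 0 * Real.log k))) :=
    (Continuous.tendsto (ENNReal.continuous_ofReal.comp (by fun_prop)) 0).mono_left
      nhdsWithin_le_nhds
  simp only [mul_zero, add_zero, zero_mul, one_div_mul_eq_div] at hcont
  refine ge_of_tendsto hcont ?_
  filter_upwards [Ioo_mem_nhdsGT (show (0 : ℝ) < 1 / 2 by positivity)] with ε ⟨hε, hε1⟩
  obtain ⟨D, hD⟩ := hf.exists_eventually_shannonEnt_le hm hf0 hfm hfc hfC hlln hrare haep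
    (lt_add_of_pos_right h hε) hP hε (by linarith) (a := (1 + ε) / c)
    (by rw [← hc, div_mul_cancel₀ _ hfc.ne']; linarith)
  have hlim : Tendsto (fun n : ℕ => ENNReal.ofReal ((⌊(1 + ε) / c * n⌋₊ / n
      + 2 * (⌊ε * n⌋₊ / n) + 1 / n) * (h + ε) + D / n + ε + 2 * ε * Real.log k + 1 / n)) atTop
      (𝓝 (ENNReal.ofReal (((1 + ε) / c + 2 * ε + 0) * (h + ε) + 0 + ε + 2 * ε * Real.log k + 0))) :=
    (ENNReal.continuous_ofReal.tendsto _).comp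
      (((((((tendsto_natFloor_mul_div (by positivity)).add
        ((tendsto_natFloor_mul_div hε.le).const_mul 2)).add
        (tendsto_const_div_atTop_nhds_zero_nat 1)).mul_const _).add
        (tendsto_const_div_atTop_nhds_zero_nat D)).add_const _).add_const _ |>.add
        (tendsto_const_div_atTop_nhds_zero_nat 1))
  simp only [add_zero] at hlim
  rw [← hlim.liminf_eq]
  refine liminf_le_liminf ?_
  filter_upwards [hD, eventually_gt_atTop 0] with n hn hn0
  have hn0' : (0 : ℝ) < n := by exact_mod_cast hn0
  refine ENNReal.ofReal_le_ofReal ((div_le_div_of_nonneg_right hn hn0'.le).trans_eq ?_)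
  push_cast
  field_simp

end UpperBound

section MeanErgodic

variable {X : Type*} [MeasurableSpace X] {T : X → X} {m : Measure X} {f : X → ℝ}

lemma birkhoffAverage_compMeasurePreserving_ae_eq (hT : MeasurePreserving T m m)
    (hf : MemLp f 2 m) (n : ℕ) :
    (birkhoffAverage ℝ (Lp.compMeasurePreservingₗᵢ ℝ T hT) id n (hf.toLp f) : Lp ℝ 2 m)
      =ᵐ[m] birkhoffAverage ℝ T f n := by
  set U := Lp.compMeasurePreservingₗᵢ ℝ T hT (E := ℝ) (p := 2)
  have hiter (i : ℕ) : U^[i] (hf.toLp f)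
      =ᵐ[m] fun x => f (T^[i] x) := by
    have : U^[i] (hf.toLp f)
        = (hf.comp_measurePreserving (hT.iterate i)).toLp _ := by
      rw [← Lp.toLp_compMeasurePreserving hf (hT.iterate i), ← Lp.compMeasurePreserving_iterate]
      rfl
    rw [this]
    exact MemLp.coeFn_toLp _
  have hsum : (birkhoffSum U id n (hf.toLp f) : Lp ℝ 2 m)
      =ᵐ[m] birkhoffSum T f n := by
    induction n with
    | zero => simpa only [birkhoffSum_zero', Pi.zero_apply] using Lp.coeFn_zero ℝ 2 m
    | succ n ih =>
      filter_upwards [Lp.coeFn_add (birkhoffSum U id n (hf.toLp f)) (U^[n] (hf.toLp f)), ih,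
        hiter n] with x hadd hx hn
      rw [birkhoffSum_succ, birkhoffSum_succ, id, hadd, Pi.add_apply, hx, hn]
  filter_upwards [Lp.coeFn_smul (n : ℝ)⁻¹ (birkhoffSum U id n (hf.toLp f)), hsum] with x hsmul hx
  rw [birkhoffAverage, hsmul, Pi.smul_apply, hx, birkhoffAverage]

theorem lawOfLargeNumbers_of_ergodic [IsProbabilityMeasure m] (hT : Ergodic T m)
    (hf : MemLp f 2 m) : LawOfLargeNumbers T m f := by
  set K : Lp ℝ 2 m →L[ℝ] Lp ℝ 2 m :=
    (Lp.compMeasurePreservingₗᵢ ℝ T hT.toMeasurePreserving).toContinuousLinearMap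
  set F := K.eqLocus (1 : Lp ℝ 2 m →L[ℝ] Lp ℝ 2 m)
  have hlim := K.tendsto_birkhoffAverage_orthogonalProjection
    (LinearIsometry.norm_toContinuousLinearMap_le _) (hf.toLp f)
  set Pf := F.orthogonalProjectionOnto (hf.toLp f)
  obtain ⟨c, hc⟩ : ∃ c, (Pf : Lp ℝ 2 m) =ᵐ[m] Function.const X c :=
    hT.ae_eq_const_of_ae_eq_comp_ae (Lp.aestronglyMeasurable _)
      ((Lp.coeFn_compMeasurePreserving _ hT.toMeasurePreserving).symm.trans
        (by rw [show Lp.compMeasurePreserving T hT.toMeasurePreserving Pf.1 = Pf from Pf.2]))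
  have hone : indicatorConstLp 2 MeasurableSet.univ (measure_ne_top m _) (1 : ℝ) ∈ F :=
    Lp.indicatorConstLp_compMeasurePreserving MeasurableSet.univ _ _ hT.toMeasurePreserving
  have hcf : c = ∫ x, f x ∂m := by
    have := F.inner_orthogonalProjectionOnto_eq_of_mem_left ⟨_, hone⟩ (hf.toLp f)
    rw [Submodule.coe_inner, L2.inner_indicatorConstLp_one, L2.inner_indicatorConstLp_one,
      Measure.restrict_univ, integral_congr_ae hc, integral_congr_ae hf.coeFn_toLp] at this
    simpa using this
  refine (tendstoInMeasure_of_tendsto_Lp hlim).congr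
    (birkhoffAverage_compMeasurePreserving_ae_eq hT.toMeasurePreserving hf) ?_
  rw [← hcf]
  exact hc

end MeanErgodic

section Ergodicity

open scoped symmDiff

variable {X : Type*} {mX : MeasurableSpace X} {T : X → X} {m : Measure X} [IsProbabilityMeasure m]

lemma abs_measureReal_sub_sq_le_of_inter_preimage {S : X → X} (hS : MeasurePreserving S m m)
    {s t : Set X} (hs : MeasurableSet s) (hSs : S ⁻¹' s = s) (ht : MeasurableSet t)
    (hSt : m.real (t ∩ S ⁻¹' t) = m.real t ^ 2) :
    |m.real s - m.real s ^ 2| ≤ 4 * m.real (t ∆ s) := by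
  have hts : |m.real t - m.real s| ≤ m.real (t ∆ s) :=
    abs_measureReal_sub_le_measureReal_symmDiff ht.nullMeasurableSet hs.nullMeasurableSet
  have hpre : m.real ((S ⁻¹' t) ∆ s) = m.real (t ∆ s) := by
    conv_lhs => rw [← hSs, ← Set.preimage_symmDiff]
    exact hS.measureReal_preimage (ht.symmDiff hs).nullMeasurableSet
  have hinter : (t ∩ S ⁻¹' t) ∆ s ⊆ t ∆ s ∪ (S ⁻¹' t) ∆ s := fun x hx => by
    simp only [Set.mem_symmDiff, Set.mem_union, Set.mem_inter_iff] at hx ⊢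
    tauto
  have hsq : |m.real t ^ 2 - m.real s| ≤ 2 * m.real (t ∆ s) := by
    rw [← hSt]
    refine (abs_measureReal_sub_le_measureReal_symmDiff
      (ht.inter (hS.measurable ht)).nullMeasurableSet hs.nullMeasurableSet).trans
      ((measureReal_mono hinter).trans ((measureReal_union_le _ _).trans ?_))
    rw [hpre, two_mul]
  have hts' := abs_le.1 hts
  have hsq' := abs_le.1 hsq
  have hs0 := measureReal_nonneg (μ := m) (s := s)
  have hs1 : m.real s ≤ 1 := measureReal_le_one
  have ht0 := measureReal_nonneg (μ := m) (s := t)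
  have ht1 : m.real t ≤ 1 := measureReal_le_one
  rw [abs_le]
  constructor <;> nlinarith

lemma ergodic_of_forall_exists_measureReal_inter_preimage (hT : MeasurePreserving T m m)
    {C : Set (Set X)} (hC : IsSetAlgebra C) (hgen : mX = MeasurableSpace.generateFrom C)
    (hmix : ∀ t ∈ C, ∃ n, m.real (t ∩ T^[n] ⁻¹' t) = m.real t ^ 2) : Ergodic T m := by
  refine ⟨hT, ⟨fun s hs hTs => ?_⟩⟩
  have hTns (n : ℕ) : T^[n] ⁻¹' s = s := by
    rw [Set.preimage_iterate_eq]
    exact Function.iterate_fixed hTs n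
  have hidem : m.real s = m.real s ^ 2 := by
    refine eq_of_forall_dist_le fun ε hε => ?_
    obtain ⟨t, htC, ht⟩ := exists_measure_symmDiff_lt_of_generateFrom_isSetRing (μ := m)
      hC.isSetRing ⟨{Set.univ}, Set.countable_singleton _, by simpa using hC.univ_mem, by simp⟩
      hgen hs (ENNReal.ofReal_pos.2 (show 0 < ε / 4 by positivity))
    obtain ⟨n, hn⟩ := hmix t htC
    have htm : MeasurableSet t := hgen ▸ MeasurableSpace.measurableSet_generateFrom htC
    have hts : m.real (t ∆ s) ≤ ε / 4 := ENNReal.toReal_le_of_le_ofReal (by positivity) ht.le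
    rw [Real.dist_eq]
    linarith [abs_measureReal_sub_sq_le_of_inter_preimage (hT.iterate n) hs (hTns n) htm hn]
  rw [eventuallyConst_set']
  refine (eq_zero_or_one_of_sq_eq_self hidem.symm).imp (fun h => ?_) fun h => ?_
  · exact ae_eq_empty.2 ((measureReal_eq_zero_iff (by finiteness)).1 h)
  · rw [measureReal_def, ENNReal.toReal_eq_one_iff] at h
    rwa [ae_eq_univ_iff_measure_eq hs.nullMeasurableSet, measure_univ]

end Ergodicity

section BernoulliShift

variable {A : Type*} [MeasurableSpace A] (ν : Measure A) [IsProbabilityMeasure ν]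

lemma exists_disjoint_map_addRightEmbedding (I : Finset ℤ) :
    ∃ n : ℕ, Disjoint I (I.map (addRightEmbedding (n : ℤ))) := by
  obtain ⟨b, hb⟩ := I.bddAbove
  obtain ⟨a, ha⟩ := I.bddBelow
  refine ⟨(b - a + 1).toNat, Finset.disjoint_left.2 fun i hi hi' => ?_⟩
  obtain ⟨j, hj, rfl⟩ := Finset.mem_map.1 hi'
  have hle := hb hi
  have hge := ha hj
  rw [addRightEmbedding_apply] at hle
  omega

lemma measurePreserving_shift_infinitePi :
    MeasurePreserving (shift A) (Measure.infinitePi fun _ : ℤ => ν)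
      (Measure.infinitePi fun _ : ℤ => ν) :=
  ⟨(shift A).measurable, Measure.map_infinitePi_infinitePi_of_inj (P := fun _ : ℤ => ν)
    (add_left_injective (1 : ℤ))⟩

lemma ergodic_shift_infinitePi : Ergodic (shift A) (Measure.infinitePi fun _ : ℤ => ν) := by
  refine ergodic_of_forall_exists_measureReal_inter_preimage (measurePreserving_shift_infinitePi ν)
    isSetAlgebra_measurableCylinders (generateFrom_measurableCylinders (α := fun _ : ℤ => A)).symm
    fun t ht => ?_
  obtain ⟨I, S, hS, rfl⟩ := (mem_measurableCylinders t).1 ht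
  obtain ⟨n, hn⟩ := exists_disjoint_map_addRightEmbedding I
  have hindep := (ProbabilityTheory.iIndepFun_infinitePi (P := fun _ : ℤ => ν)
    (X := fun _ x => x) fun _ => measurable_id).indepFun_finset _ _ hn
    fun i => measurable_pi_apply i
  have hmem (i : I) : (i : ℤ) + n ∈ I.map (addRightEmbedding (n : ℤ)) :=
    Finset.mem_map_of_mem _ i.2
  have hshift : (shift A)^[n] ⁻¹' cylinder I S = (fun u (i : I.map (addRightEmbedding (n : ℤ))) =>
      u i) ⁻¹' ((fun w i => w ⟨i + n, hmem i⟩) ⁻¹' S) := by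
    ext u
    simp only [Set.mem_preimage, mem_cylinder, Finset.restrict_def, shift_iterate_apply]
  refine ⟨n, ?_⟩
  have hpres := ((measurePreserving_shift_infinitePi ν).iterate n).measureReal_preimage
    (hS.cylinder I).nullMeasurableSet
  have hmul := congrArg ENNReal.toReal (hindep.measure_inter_preimage_eq_mul _ _ hS
    ((measurable_pi_lambda _ fun i => measurable_pi_apply _) hS :
      MeasurableSet ((fun w i => w ⟨i + n, hmem i⟩) ⁻¹' S)))
  rw [hshift] at hpres
  rw [sq, hshift]
  exact (hmul.trans ENNReal.toReal_mul).trans (congrArg (_ * ·) hpres)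

lemma ae_measureReal_singleton_ne_zero [Countable A] : ∀ᵐ a ∂ν, ν.real {a} ≠ 0 := by
  have hnull : ν (⋃ a ∈ {a | ν.real {a} = 0}, {a}) = 0 :=
    (measure_biUnion_null_iff (Set.to_countable _)).2 fun a ha =>
      (measureReal_eq_zero_iff (by finiteness)).1 ha
  rw [Set.biUnion_of_singleton] at hnull
  simpa only [ae_iff, not_not] using hnull

lemma measureReal_map_itinerary_shift_infinitePi [MeasurableSingletonClass A] (n : ℕ)
    (w : Fin n → A) :
    ((Measure.infinitePi fun _ : ℤ => ν).map (itinerary (shift A) (· 0) n)).real {w}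
      = ∏ i, ν.real {w i} := by
  have hinj : Function.Injective fun i : Fin n => (i : ℤ) := fun i j h => by
    simpa [Fin.ext_iff] using h
  have hmap := Measure.map_infinitePi_infinitePi_of_inj (P := fun _ : ℤ => ν) hinj
  have hit : itinerary (shift A) (· 0) n = fun u i => u ((i : ℕ) : ℤ) := by
    funext u i
    rw [itinerary, shift_iterate_apply, zero_add]
  rw [hit, hmap, measureReal_def, Measure.infinitePi_singleton_of_fintype, ENNReal.toReal_prod]
  rfl

lemma integral_neg_log_measureReal_singleton [Fintype A] [MeasurableSingletonClass A] :
    ∫ a, -Real.log (ν.real {a}) ∂ν = shannonEnt ν := by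
  rw [integral_fintype (.of_finite), shannonEnt_eq_sum_measureReal]
  refine Finset.sum_congr rfl fun a _ => ?_
  rw [smul_eq_mul, Real.negMulLog, mul_neg, neg_mul]

theorem equipartitionProperty_shift_infinitePi [Fintype A] [MeasurableSingletonClass A] :
    EquipartitionProperty (shift A) (Measure.infinitePi fun _ : ℤ => ν) (· 0) (shannonEnt ν) := by
  set m := Measure.infinitePi fun _ : ℤ => ν
  set I : A → ℝ := fun a => -Real.log (ν.real {a})
  have hI : MemLp I 2 ν := .of_discrete
  have heval (j : ℤ) : MeasurePreserving (Function.eval j) m ν :=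
    measurePreserving_eval_infinitePi (fun _ : ℤ => ν) j
  have hlln := lawOfLargeNumbers_of_ergodic (ergodic_shift_infinitePi ν)
    (hI.comp_measurePreserving (heval 0))
  have hint : ∫ u, (I ∘ Function.eval 0) u ∂m = shannonEnt ν := by
    calc ∫ u, (I ∘ Function.eval 0) u ∂m = ∫ a, I a ∂m.map (Function.eval 0) :=
          (integral_map (heval 0).aemeasurable Measurable.of_discrete.aestronglyMeasurable).symm
      _ = shannonEnt ν := by rw [(heval 0).map_eq, integral_neg_log_measureReal_singleton]
  have hpos : ∀ᵐ u ∂m, ∀ j : ℕ, ν.real {u j} ≠ 0 := ae_all_iff.2 fun j =>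
    (heval j).quasiMeasurePreserving.ae (ae_measureReal_singleton_ne_zero ν)
  rw [LawOfLargeNumbers, hint] at hlln
  refine hlln.congr (fun n => ?_) .rfl
  filter_upwards [hpos] with u hu
  rw [measureReal_map_itinerary_shift_infinitePi, birkhoffAverage, birkhoffSum,
    Finset.sum_range, Real.log_prod, ← Finset.sum_neg_distrib, smul_eq_mul, inv_mul_eq_div]
  · simp only [itinerary, Function.comp_apply, Function.eval, I]
  · intro i _
    rw [itinerary, shift_iterate_apply, zero_add]
    exact hu i

lemma measure_avoiding_infinitePi [MeasurableSingletonClass A] (a₀ : A) (R : ℕ) :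
    (Measure.infinitePi fun _ : ℤ => ν) (avoiding a₀ R) = ν {a₀}ᶜ ^ (R + 1) := by
  have hpi : avoiding a₀ R =
      Set.pi ((Finset.range (R + 1)).map (Nat.castEmbedding (R := ℤ))) fun _ => {a₀}ᶜ := by
    ext u
    simp [avoiding, Set.mem_pi]
  rw [hpi, Measure.infinitePi_pi _ fun _ _ => (measurableSet_singleton a₀).compl,
    Finset.prod_const, Finset.card_map, Finset.card_range]

lemma tendsto_measureReal_avoiding_infinitePi [MeasurableSingletonClass A] {a₀ : A}
    (ha₀ : ν {a₀} ≠ 0) :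
    Tendsto (fun R => (Measure.infinitePi fun _ : ℤ => ν).real (avoiding a₀ R)) atTop (𝓝 0) := by
  have hlt : ν.real {a₀}ᶜ < 1 := by
    rw [probReal_compl_eq_one_sub (measurableSet_singleton a₀), sub_lt_self_iff]
    exact ENNReal.toReal_pos ha₀ (by finiteness)
  simp only [measureReal_def, measure_avoiding_infinitePi, ENNReal.toReal_pow]
  exact (tendsto_add_atTop_iff_nat 1).2
    (tendsto_pow_atTop_nhds_zero_of_lt_one measureReal_nonneg hlt)

theorem DeterminedBetween.kolSinai_suspFlow_infinitePi [Fintype A]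
    [MeasurableSingletonClass A] {f : (ℤ → A) → ℝ} {a₀ : A} (hf : DeterminedBetween a₀ f)
    (hf0 : 0 ≤ f) (hfm : Measurable f) {C : ℝ} (hfC : ∀ u, f u ≤ C)
    (hfc : 0 < ∫ u, f u ∂Measure.infinitePi fun _ : ℤ => ν) (ha₀ : ν {a₀} ≠ 0) :
    kolSinai (suspFlow (shift A) f 1)
        (suspMeasure (shift A) f (Measure.infinitePi fun _ : ℤ => ν))
      = ENNReal.ofReal (shannonEnt ν / ∫ u, f u ∂Measure.infinitePi fun _ : ℤ => ν) := by
  have hshift := measurePreserving_shift_infinitePi ν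
  have hlln : LawOfLargeNumbers (shift A) (Measure.infinitePi fun _ : ℤ => ν) f :=
    lawOfLargeNumbers_of_ergodic (ergodic_shift_infinitePi ν)
      (.of_bound hfm.aestronglyMeasurable C (ae_of_all _ fun u => by
        rw [Real.norm_of_nonneg (hf0 u)]; exact hfC u))
  have haep := equipartitionProperty_shift_infinitePi ν
  exact le_antisymm
    (hf.kolSinai_suspFlow_le hshift hf0 hfm hfc hfC hlln
      (tendsto_measureReal_avoiding_infinitePi ν ha₀) haep)
    (ofReal_div_le_kolSinai_suspFlow hshift hf0 hfm hfc hfC hlln (measurable_pi_apply 0) haep)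

end BernoulliShift

section Roof

variable {g : ℕ → ℝ} {u v : BSeq}

lemma exists_eq_true_of_ne_zeroSeq (hu : u ≠ zeroSeq) : ∃ n, u n = true := by
  by_contra! h
  exact hu (funext fun n => by simpa [zeroSeq] using h n)

lemma ne_zeroSeq_of_eq_true {n : ℤ} (hn : u n = true) : u ≠ zeroSeq := by
  rintro rfl
  simp [zeroSeq] at hn

lemma kabs_zeroSeq : kabs zeroSeq = 0 := by simp [kabs, zeroSeq]

lemma kabs_le_natAbs {n : ℤ} (hn : u n = true) : kabs u ≤ n.natAbs :=
  Nat.sInf_le ⟨n, rfl, hn⟩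

lemma exists_natAbs_eq_kabs (hu : u ≠ zeroSeq) : ∃ n : ℤ, n.natAbs = kabs u ∧ u n = true := by
  obtain ⟨n, hn⟩ := exists_eq_true_of_ne_zeroSeq hu
  exact Nat.sInf_mem (s := {m | ∃ n : ℤ, n.natAbs = m ∧ u n = true}) ⟨_, n, rfl, hn⟩

lemma lt_kabs_iff (hu : u ≠ zeroSeq) {k : ℕ} :
    k < kabs u ↔ ∀ n ∈ Finset.Icc (-(k : ℤ)) k, u n = false := by
  refine ⟨fun h n hn => ?_, fun h => ?_⟩
  · rw [Finset.mem_Icc] at hn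
    rw [← Bool.not_eq_true]
    intro hun
    have := kabs_le_natAbs hun
    omega
  · obtain ⟨n, hn, hun⟩ := exists_natAbs_eq_kabs hu
    by_contra! hle
    exact Bool.false_ne_true ((h n (by rw [Finset.mem_Icc]; omega)).symm.trans hun)

lemma kabs_le_kabs_of_eqOn_Icc {a b : ℤ} (ha : a ≤ 0) (hb : 0 ≤ b) (hua : u a = true)
    (hub : u b = true) (huv : Set.EqOn u v (Set.Icc a b)) : kabs v ≤ kabs u := by
  obtain ⟨n, hn, hun⟩ := exists_natAbs_eq_kabs (ne_zeroSeq_of_eq_true hua)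
  have hna := kabs_le_natAbs hua
  have hnb := kabs_le_natAbs hub
  rw [← hn]
  exact kabs_le_natAbs ((huv ⟨by omega, by omega⟩).symm.trans hun)

lemma determinedBetween_fRoof (g : ℕ → ℝ) : DeterminedBetween true (fRoof g) := by
  intro u v a ha b hb hua hub huv
  have hva := (huv ⟨le_rfl, ha.trans hb⟩).symm.trans hua
  have hvb := (huv ⟨ha.trans hb, le_rfl⟩).symm.trans hub
  rw [fRoof, fRoof, if_neg (ne_zeroSeq_of_eq_true hua), if_neg (ne_zeroSeq_of_eq_true hva),
    (kabs_le_kabs_of_eqOn_Icc ha hb hva hvb huv.symm).antisymm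
      (kabs_le_kabs_of_eqOn_Icc ha hb hua hub huv)]

lemma fRoof_nonneg (hg : ∀ k, 0 ≤ g k) : 0 ≤ fRoof g := by
  intro u
  rw [fRoof]
  split_ifs
  exacts [le_rfl, hg _]

lemma fRoof_le {C : ℝ} (hC : 0 ≤ C) (hg : ∀ k, g k ≤ C) (u : BSeq) : fRoof g u ≤ C := by
  rw [fRoof]
  split_ifs
  exacts [hC, hg _]

lemma measurableSet_forall_eq_false (s : Finset ℤ) :
    MeasurableSet {u : BSeq | ∀ n ∈ s, u n = false} := by
  simp only [Set.ofPred_forall]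
  exact Finset.measurableSet_biInter s fun n _ =>
    measurableSet_eq_fun (measurable_pi_apply n) measurable_const

lemma measurable_kabs : Measurable kabs := by
  refine measurable_of_Ioi fun k => ?_
  have hset : kabs ⁻¹' Set.Ioi k
      = {u : BSeq | ∀ n ∈ Finset.Icc (-(k : ℤ)) k, u n = false} \ {zeroSeq} := by
    ext u
    rcases eq_or_ne u zeroSeq with rfl | hu
    · simp [kabs_zeroSeq]
    · simpa [hu] using lt_kabs_iff hu
  rw [hset]
  exact (measurableSet_forall_eq_false _).diff (measurableSet_singleton _)

lemma measurable_fRoof (g : ℕ → ℝ) : Measurable (fRoof g) := by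
  unfold fRoof
  exact .ite (measurableSet_singleton zeroSeq) measurable_const
    (measurable_from_nat.comp measurable_kabs)

lemma bddAbove_range_of_tendsto_natCast_mul {l : ℝ}
    (hg : Tendsto (fun k : ℕ => (k : ℝ) * g k) atTop (𝓝 l)) : BddAbove (Set.range g) := by
  have hlim := hg.mul (tendsto_inv_atTop_nhds_zero_nat (𝕜 := ℝ))
  refine (hlim.congr' ?_).bddAbove_range
  filter_upwards [eventually_ne_atTop 0] with k hk
  field_simp

end Roof

section BinaryShift

variable (ν : Measure Bool) [IsProbabilityMeasure ν]

lemma measureReal_singleton_false : ν.real {false} = 1 - ν.real {true} := by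
  rw [← probReal_compl_eq_one_sub (measurableSet_singleton true)]
  congr
  ext b
  simp

lemma shannonEnt_eq_binEntropy : shannonEnt ν = Real.binEntropy (ν.real {true}) := by
  rw [shannonEnt_eq_sum_measureReal, Fintype.sum_bool, measureReal_singleton_false,
    Real.binEntropy_eq_negMulLog_add_negMulLog_one_sub]

variable {ν}

lemma ae_ne_zeroSeq (hν : 0 < ν.real {true}) :
    ∀ᵐ u ∂Measure.infinitePi fun _ : ℤ => ν, u ≠ zeroSeq := by
  have hν' : ν {true} ≠ 0 := (ENNReal.toReal_pos_iff.1 hν).1.ne'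
  have hnull : (Measure.infinitePi fun _ : ℤ => ν).real {u | u = zeroSeq} = 0 :=
    (ge_of_tendsto' (tendsto_measureReal_avoiding_infinitePi ν hν') fun R =>
      measureReal_mono (by rintro u rfl; simp [avoiding, zeroSeq])).antisymm measureReal_nonneg
  simpa only [ae_iff, not_not] using (measureReal_eq_zero_iff (by finiteness)).1 hnull

lemma measureReal_lt_kabs (hν : 0 < ν.real {true}) (k : ℕ) :
    (Measure.infinitePi fun _ : ℤ => ν).real {u | k < kabs u}
      = (1 - ν.real {true}) ^ (2 * k + 1) := by
  have hae : {u | k < kabs u} =ᵐ[Measure.infinitePi fun _ : ℤ => ν]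
      Set.pi (Finset.Icc (-(k : ℤ)) k) fun _ => {false} := by
    filter_upwards [ae_ne_zeroSeq hν] with u hu
    exact propext (lt_kabs_iff hu)
  rw [measureReal_congr hae, measureReal_def,
    Measure.infinitePi_pi _ fun _ _ => measurableSet_singleton false, Finset.prod_const,
    ENNReal.toReal_pow, ← measureReal_def, measureReal_singleton_false, Int.card_Icc]
  congr
  omega

lemma measureReal_kabs_eq_zero (hν : 0 < ν.real {true}) :
    (Measure.infinitePi fun _ : ℤ => ν).real {u | kabs u = 0} = ν.real {true} := by
  have hset : {u | kabs u = 0} = {u | 0 < kabs u}ᶜ := by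
    ext u
    simp
  have hmeas : MeasurableSet {u | 0 < kabs u} := measurable_kabs measurableSet_Ioi
  rw [hset, probReal_compl_eq_one_sub hmeas, measureReal_lt_kabs hν]
  ring

lemma measureReal_kabs_eq_succ (hν : 0 < ν.real {true}) (k : ℕ) :
    (Measure.infinitePi fun _ : ℤ => ν).real {u | kabs u = k + 1}
      = (1 - ν.real {true}) ^ (2 * k + 1) - (1 - ν.real {true}) ^ (2 * k + 3) := by
  have hset : {u | kabs u = k + 1} = {u | k < kabs u} \ {u | k + 1 < kabs u} := by
    ext u
    simp only [Set.mem_ofPred_eq, Set.mem_sdiff]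
    omega
  have hsub : {u | k + 1 < kabs u} ⊆ {u | k < kabs u} := fun u hu => (Nat.lt_succ_self k).trans hu
  rw [hset, measureReal_sdiff hsub (measurable_kabs measurableSet_Ioi), measureReal_lt_kabs hν,
    measureReal_lt_kabs hν]
  rfl

variable {g : ℕ → ℝ} {C : ℝ}

lemma integral_fRoof_infinitePi (hν : 0 < ν.real {true}) (hg : ∀ k, |g k| ≤ C) :
    ∫ u, fRoof g u ∂Measure.infinitePi (fun _ : ℤ => ν)
      = ν.real {true} * g 0 + (1 - ν.real {true}) * (ν.real {true} * (2 - ν.real {true}))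
        * ∑' k, g (k + 1) * ((1 - ν.real {true}) ^ 2) ^ k := by
  set m := Measure.infinitePi fun _ : ℤ => ν
  set p := ν.real {true}
  have hp1 : p ≤ 1 := measureReal_le_one
  have := Measure.isProbabilityMeasure_map (μ := m) measurable_kabs.aemeasurable
  have hint : Integrable g (m.map kabs) :=
    .of_bound measurable_from_nat.aestronglyMeasurable C (ae_of_all _ hg)
  have hlaw (k : ℕ) : (m.map kabs).real {k} = m.real {u | kabs u = k} :=
    map_measureReal_apply measurable_kabs (measurableSet_singleton k)
  have hterm (k : ℕ) : (m.map kabs).real {k + 1} • g (k + 1)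
      = (1 - p) * (p * (2 - p)) * (g (k + 1) * ((1 - p) ^ 2) ^ k) := by
    rw [hlaw, measureReal_kabs_eq_succ hν, smul_eq_mul, ← pow_mul]
    ring
  have hgeom : Summable fun k => g (k + 1) * ((1 - p) ^ 2) ^ k := by
    refine summable_mul_pow_of_isBigO (b := fun _ => 1)
      (.of_bound C (.of_forall fun k => by simpa using hg (k + 1))) ?_
    simpa using summable_geometric_of_lt_one (sq_nonneg (1 - p)) (by nlinarith [hν])
  have hsum : Summable fun k => (m.map kabs).real {k} • g k := by
    rw [← summable_nat_add_iff 1]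
    simpa only [hterm] using hgeom.mul_left _
  calc ∫ u, fRoof g u ∂m = ∫ u, g (kabs u) ∂m := by
        refine integral_congr_ae ?_
        filter_upwards [ae_ne_zeroSeq hν] with u hu using if_neg hu
    _ = ∑' k, (m.map kabs).real {k} • g k := by
        rw [← integral_map measurable_kabs.aemeasurable hint.aestronglyMeasurable,
          integral_countable hint]
    _ = p * g 0 + (1 - p) * (p * (2 - p)) * ∑' k, g (k + 1) * ((1 - p) ^ 2) ^ k := by
        simp only [hsum.tsum_eq_zero_add, hterm]
        rw [tsum_mul_left, hlaw, measureReal_kabs_eq_zero hν, smul_eq_mul]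

lemma integral_fRoof_infinitePi_pos (hν : 0 < ν.real {true}) (hg0 : ∀ k, 0 < g k)
    (hgC : ∀ k, g k ≤ C) : 0 < ∫ u, fRoof g u ∂Measure.infinitePi fun _ : ℤ => ν := by
  rw [integral_fRoof_infinitePi hν fun k => (abs_of_pos (hg0 k)).trans_le (hgC k)]
  have hp1 : 0 ≤ 1 - ν.real {true} := sub_nonneg.2 measureReal_le_one
  have hp2 : 0 ≤ 2 - ν.real {true} := by linarith
  have hseries : 0 ≤ ∑' k, g (k + 1) * ((1 - ν.real {true}) ^ 2) ^ k :=
    tsum_nonneg fun k => mul_nonneg (hg0 _).le (by positivity)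
  have := hg0 0
  positivity

theorem kolSinai_suspFlow_fRoof_infinitePi (hν : 0 < ν.real {true}) (hg0 : ∀ k, 0 < g k)
    (hgC : ∀ k, g k ≤ C) :
    kolSinai (suspFlow (shift Bool) (fRoof g) 1)
        (suspMeasure (shift Bool) (fRoof g) (Measure.infinitePi fun _ : ℤ => ν))
      = ENNReal.ofReal (Real.binEntropy (ν.real {true})
          / ∫ u, fRoof g u ∂Measure.infinitePi fun _ : ℤ => ν) := by
  rw [← shannonEnt_eq_binEntropy]
  exact (determinedBetween_fRoof g).kolSinai_suspFlow_infinitePi ν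
    (fRoof_nonneg fun k => (hg0 k).le) (measurable_fRoof g)
    (fRoof_le ((hg0 0).le.trans (hgC 0)) hgC) (integral_fRoof_infinitePi_pos hν hg0 hgC)
    (ENNReal.toReal_pos_iff.1 hν).1.ne'

end BinaryShift

section BernoulliCylinders

open ProbabilityTheory unitInterval

lemma eq_infinitePi_of_apply_cylinder {ι A : Type*} [Countable A] [MeasurableSpace A]
    [MeasurableSingletonClass A] {ν : Measure A} [IsProbabilityMeasure ν] {m : Measure (ι → A)}
    (hm : ∀ (s : Finset ι) (v : ι → A), m {u | ∀ i ∈ s, u i = v i} = ∏ i ∈ s, ν {v i}) :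
    m = Measure.infinitePi fun _ => ν := by
  classical
  refine IsProjectiveLimit.unique (P := fun s : Finset ι => Measure.pi fun _ : s => ν)
    (fun s => Measure.ext_of_singleton fun w => ?_) (Measure.isProjectiveLimit_infinitePi _)
  have : Nonempty A := ν.nonempty_of_neZero
  obtain ⟨v, rfl⟩ := Subtype.val_injective.surjective_comp_right (γ := A) w
  have hset : (s.restrict (π := fun _ => A)) ⁻¹' {fun i : s => v i}
      = {u : ι → A | ∀ i ∈ s, u i = v i} := by
    ext u
    simp [funext_iff]
  calc m.map s.restrict {fun i : s => v i} = ∏ i ∈ s, ν {v i} := by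
        rw [Measure.map_apply (by fun_prop) (measurableSet_singleton _), hset, hm]
    _ = Measure.pi (fun _ : s => ν) {fun i : s => v i} := by
        rw [Measure.pi_singleton, Finset.prod_coe_sort s fun i => ν {v i}]

lemma bernoulliMeasure_bool_singleton (p : I) (b : Bool) :
    Ber(true, false, p) {b} = ENNReal.ofReal (if b then p else 1 - p) := by
  rw [← ofReal_measureReal]
  cases b <;> simp

lemma eq_infinitePi_bernoulliMeasure {p : I} {m : Measure BSeq}
    (hm : ∀ (s : Finset ℤ) (v : ℤ → Bool), m {u : BSeq | ∀ n ∈ s, u n = v n}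
      = ∏ n ∈ s, ENNReal.ofReal (if v n then p else 1 - p)) :
    m = Measure.infinitePi fun _ => Ber(true, false, p) :=
  eq_infinitePi_of_apply_cylinder fun s v => by
    simp only [hm, bernoulliMeasure_bool_singleton]

end BernoulliCylinders

/-- for the Bernoulli measures `μ_λ` and the roof `f(u) = g(k_u)` with
`k g(k) → l ∈ (0,∞)`, the entropy of the induced suspension-flow measure
`ν_{μ_λ} = (μ_λ × L)/∫f dμ_λ` satisfies (Abramov) `h(ν_{μ_λ}) = h(μ_λ)/∫f dμ_λ`,
and this quantity tends to `1/(2l)` as `λ → 0`. -/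
theorem stmt_13 (g : ℕ → ℝ) (l : ℝ) (hl : 0 < l) (hgpos : ∀ k, 0 < g k)
    (hkg : Tendsto (fun k : ℕ => (k : ℝ) * g k) atTop (𝓝 l))
    (μ : ℝ → Measure BSeq) (hprob : ∀ p, IsProbabilityMeasure (μ p))
    (hber : ∀ p : ℝ, 0 < p → p < 1 → ∀ (s : Finset ℤ) (v : ℤ → Bool),
      μ p {u : BSeq | ∀ n ∈ s, u n = v n}
        = ∏ n ∈ s, ENNReal.ofReal (if v n then p else 1 - p)) :
    (∀ p : ℝ, 0 < p → p < 1 →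
      kolSinai (suspFlow shiftMap (fRoof g) 1) (suspMeasure shiftMap (fRoof g) (μ p))
        = ENNReal.ofReal
            ((-p * Real.log p - (1 - p) * Real.log (1 - p)) / ∫ u, fRoof g u ∂(μ p))) ∧
    Tendsto (fun p => (-p * Real.log p - (1 - p) * Real.log (1 - p)) / ∫ u, fRoof g u ∂(μ p))
      (𝓝[>] (0 : ℝ)) (𝓝 (1 / (2 * l))) := by
  obtain ⟨C, hC⟩ := bddAbove_range_of_tendsto_natCast_mul hkg
  have hgC (k : ℕ) : g k ≤ C := hC (Set.mem_range_self k)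
  have hH (p : ℝ) : -p * Real.log p - (1 - p) * Real.log (1 - p) = Real.binEntropy p := by
    rw [Real.binEntropy_eq_negMulLog_add_negMulLog_one_sub, Real.negMulLog, Real.negMulLog]
    ring
  have hlaw (p : ℝ) (hp0 : 0 < p) (hp1 : p < 1) : ∃ ν : Measure Bool, ∃ _ : IsProbabilityMeasure ν,
      ν.real {true} = p ∧ μ p = Measure.infinitePi fun _ => ν :=
    ⟨_, inferInstance, by simp, eq_infinitePi_bernoulliMeasure (p := ⟨p, hp0.le, hp1.le⟩)
      (hber p hp0 hp1)⟩
  simp only [hH]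
  refine ⟨fun p hp0 hp1 => ?_, ?_⟩
  · obtain ⟨ν, _, rfl, hμ⟩ := hlaw p hp0 hp1
    rw [hμ]
    exact kolSinai_suspFlow_fRoof_infinitePi hp0 hgpos hgC
  · refine (tendsto_binEntropy_div_geometric_mean hl.ne' hkg).congr' ?_
    filter_upwards [Ioo_mem_nhdsGT one_pos] with p hp
    obtain ⟨ν, _, rfl, hμ⟩ := hlaw p hp.1 hp.2
    rw [hμ, integral_fRoof_infinitePi hp.1 fun k => (abs_of_pos (hgpos k)).trans_le (hgC k)]
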